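/- arXiv:1309.0228 — 11 statements merged into one kernel-verified Lean document; each statement's English description precedes it below -/
import Mathlib

section
/- Let L be a lattice and let a ∈ L be an upper-modular element of L such that the principal ideal (a] = {x ∈ L : x ≤ a}, with the induced lattice structure, is a modular lattice. Then every element b ∈ L with b ≤ a is an upper-modular element of L. -/
/-- An element `x` of a lattice `L` is upper-modular if for all `y, z ∈ L` with `y ≤ x`
one has `x ⊓ (y ⊔ z) = y ⊔ (x ⊓ z)`. -/
def IsUpperModularElement {L : Type*} [Lattice L] (x : L) : Prop :=
  ∀ y z : L, y ≤ x → x ⊓ (y ⊔ z) = y ⊔ (x ⊓ z)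

section

variable {L : Type*} [Lattice L]

theorem isUpperModularElement_of_isModularLattice [IsModularLattice L] (x : L) :
    IsUpperModularElement x := fun y z hy => by
  rw [inf_comm, sup_inf_assoc_of_le z hy, inf_comm]

theorem IsUpperModularElement.coe_Iic {a : L} (ha : IsUpperModularElement a) {b : Set.Iic a}
    (hb : IsUpperModularElement b) : IsUpperModularElement (b : L) := by
  intro y z hy
  have hba : (b : L) ≤ a := b.2
  have hya : y ≤ a := hy.trans hba
  -- Upper-modularity of `a` lets us replace `z` by `a ⊓ z`, which lies in the ideal.
  have hb_inf : ↑b ⊓ (y ⊔ a ⊓ z) = y ⊔ ↑b ⊓ (a ⊓ z) :=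
    congrArg Subtype.val (hb ⟨y, hya⟩ ⟨a ⊓ z, inf_le_left⟩ hy)
  calc
    ↑b ⊓ (y ⊔ z) = ↑b ⊓ (a ⊓ (y ⊔ z)) := by rw [← inf_assoc, inf_eq_left.mpr hba]
    _ = ↑b ⊓ (y ⊔ a ⊓ z) := by rw [ha y z hya]
    _ = y ⊔ ↑b ⊓ (a ⊓ z) := hb_inf
    _ = y ⊔ ↑b ⊓ z := by rw [← inf_assoc, inf_eq_left.mpr hba]

end

/-- If `a` is an upper-modular element of a lattice `L` and the principal ideal
`(a] = {x ∈ L : x ≤ a}` (with the induced lattice structure, whose meets and joins are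
those of `L`) is a modular lattice, then every `b ≤ a` is an upper-modular element of `L`. -/
theorem upperModular_of_le_of_upperModular {L : Type*} [Lattice L] (a : L)
    (ha : IsUpperModularElement a)
    (hmod : ∀ x y z : L, x ≤ a → y ≤ a → z ≤ a → x ≤ z → x ⊔ (y ⊓ z) = (x ⊔ y) ⊓ z) :
    ∀ b : L, b ≤ a → IsUpperModularElement b := by
  intro b hb
  have : IsModularLattice (Set.Iic a) :=
    ⟨fun {x} y {z} hxz => (hmod x y z x.2 y.2 z.2 hxz).ge⟩
  exact ha.coe_Iic (isUpperModularElement_of_isModularLattice (⟨b, hb⟩ : Set.Iic a))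
end

section
/- Let L be a lattice and let a ∈ L be a codistributive element of L such that the principal ideal (a] = {x ∈ L : x ≤ a}, with the induced lattice structure, is a distributive lattice. Then every element b ∈ L with b ≤ a is a codistributive element of L. -/
/-- An element `x` of a lattice `L` is codistributive if for all `y, z ∈ L`
one has `x ⊓ (y ⊔ z) = (x ⊓ y) ⊔ (x ⊓ z)`. -/
def IsCodistributiveElement {L : Type*} [Lattice L] (x : L) : Prop :=
  ∀ y z : L, x ⊓ (y ⊔ z) = (x ⊓ y) ⊔ (x ⊓ z)

theorem codistributive_of_le_of_codistributive_general {L : Type*} [Lattice L] {a b : L}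
    (ha : IsCodistributiveElement a) (hba : b ≤ a)
    (hb : IsCodistributiveElement (⟨b, hba⟩ : Set.Iic a)) : IsCodistributiveElement b := by
  intro y z
  have inf_absorb (w : L) : b ⊓ (a ⊓ w) = b ⊓ w := by
    rw [← inf_assoc, inf_of_le_left hba]
  have inf_sup_in_ideal : b ⊓ ((a ⊓ y) ⊔ (a ⊓ z)) = (b ⊓ (a ⊓ y)) ⊔ (b ⊓ (a ⊓ z)) :=
    congrArg Subtype.val (hb ⟨a ⊓ y, inf_le_left⟩ ⟨a ⊓ z, inf_le_left⟩)
  calc b ⊓ (y ⊔ z)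
      = b ⊓ (a ⊓ (y ⊔ z)) := (inf_absorb _).symm
    _ = b ⊓ ((a ⊓ y) ⊔ (a ⊓ z)) := by rw [ha y z]
    _ = (b ⊓ (a ⊓ y)) ⊔ (b ⊓ (a ⊓ z)) := inf_sup_in_ideal
    _ = (b ⊓ y) ⊔ (b ⊓ z) := by rw [inf_absorb, inf_absorb]

/-- If `a` is a codistributive element of a lattice `L` and the principal ideal
`(a] = {x ∈ L : x ≤ a}` (with the induced lattice structure, whose meets and joins are
those of `L`) is a distributive lattice, then every `b ≤ a` is a codistributive element
of `L`. -/
theorem codistributive_of_le_of_codistributive {L : Type*} [Lattice L] (a : L)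
    (ha : IsCodistributiveElement a)
    (hdist : ∀ x y z : L, x ≤ a → y ≤ a → z ≤ a → x ⊓ (y ⊔ z) = (x ⊓ y) ⊔ (x ⊓ z)) :
    ∀ b : L, b ≤ a → IsCodistributiveElement b :=
  fun b hb => codistributive_of_le_of_codistributive_general ha hb
    fun y z => Subtype.ext (hdist b y z hb y.2 z.2)
end

section
/- Let S be a non-empty set and let α be an equivalence relation on S. Then α is a modular element of the lattice Eq(S) of all equivalence relations on S if and only if α has at most one non-singleton equivalence class, i.e., at most one equivalence class of α contains more than one element. -/
/-- An element `x` of a lattice `L` is modular if for all `y, z ∈ L` with `y ≤ z`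
one has `(x ⊔ y) ⊓ z = (x ⊓ z) ⊔ y`. -/
def IsModularElement {L : Type*} [Lattice L] (x : L) : Prop :=
  ∀ y z : L, y ≤ z → (x ⊔ y) ⊓ z = (x ⊓ z) ⊔ y

/-- An equivalence relation `α` on `S` has at most one non-singleton class:
any two elements lying in non-singleton classes of `α` are `α`-equivalent. -/
def HasAtMostOneNonSingletonClass {S : Type*} (α : Setoid S) : Prop :=
  ∀ x y : S, (∃ x', x' ≠ x ∧ α x x') → (∃ y', y' ≠ y ∧ α y y') → α x y

/-!
If `a ~ a'` and `b ~ b'` lie in two distinct non-singleton classes of `α`, let `y` have the single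
non-singleton class `{a', b'}`, and let `z` have in addition the class `{a, b}`. Then `z ≤ α ⊔ y`,
via the chain `a ~ a' ~ b' ~ b`, and `α ⊓ z ≤ y`, so `α` and `y < z` span a
pentagon and `α` is not modular.

Conversely, if `α ⊔ y` relates `a` and `b`, then they are `y`-related or are `y`-related to points
`u` and `v`, respectively, of non-singleton classes of `α`. When there is only one such class, `u`
and `v` are `α`-related; and if moreover `y ≤ z` and `z` relates `a` and `b`, then `z` relates `u`
and `v`. Hence `a ~ u ~ v ~ b` is a chain in `(α ⊓ z) ⊔ y`.
-/

section Lattice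

variable {L : Type*} [Lattice L] {x y z : L}

theorem isModularElement_iff_sup_inf_le :
    IsModularElement x ↔ ∀ y z : L, y ≤ z → (x ⊔ y) ⊓ z ≤ (x ⊓ z) ⊔ y :=
  ⟨fun hx y z hyz => (hx y z hyz).le, fun hx y z hyz => le_antisymm (hx y z hyz) <|
    sup_le (inf_le_inf_right z le_sup_left) (le_inf le_sup_right hyz)⟩

theorem IsModularElement.eq_of_le_of_inf_le_of_le_sup (hx : IsModularElement x) (hyz : y ≤ z)
    (hinf : x ⊓ z ≤ y) (hsup : z ≤ x ⊔ y) : y = z :=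
  calc
    y = (x ⊓ z) ⊔ y := (sup_eq_right.2 hinf).symm
    _ = (x ⊔ y) ⊓ z := (hx y z hyz).symm
    _ = z := inf_eq_right.2 hsup

end Lattice

section Setoid

variable {S : Type*} {α r t : Setoid S} {A : Set S} {u v : S}

/-- The equivalence relation obtained from `r` by merging all the classes that meet `A` into one.
It is the least equivalence relation above `r` that identifies the points of `A`. -/
def mergeClasses (r : Setoid S) (A : Set S) : Setoid S where
  r u v := r u v ∨ (∃ c ∈ A, r u c) ∧ ∃ d ∈ A, r v d
  iseqv :=
    { refl u := .inl (r.refl' u)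
      symm := by
        rintro u v (huv | ⟨hu, hv⟩)
        · exact .inl (r.symm' huv)
        · exact .inr ⟨hv, hu⟩
      trans := by
        rintro u v w (huv | ⟨hu, c, hc, hvc⟩) (hvw | ⟨⟨d, hd, hvd⟩, hw⟩)
        · exact .inl (r.trans' huv hvw)
        · exact .inr ⟨⟨d, hd, r.trans' huv hvd⟩, hw⟩
        · exact .inr ⟨hu, c, hc, r.trans' (r.symm' hvw) hvc⟩
        · exact .inr ⟨hu, hw⟩ }

theorem mergeClasses_apply :
    mergeClasses r A u v ↔ r u v ∨ (∃ c ∈ A, r u c) ∧ ∃ d ∈ A, r v d :=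
  Iff.rfl

theorem le_mergeClasses : r ≤ mergeClasses r A :=
  fun _ _ => Or.inl

theorem mergeClasses_of_mem (hu : u ∈ A) (hv : v ∈ A) : mergeClasses r A u v :=
  .inr ⟨⟨u, hu, r.refl' u⟩, v, hv, r.refl' v⟩

theorem mergeClasses_le (hr : r ≤ t) (hA : ∀ u ∈ A, ∀ v ∈ A, t u v) : mergeClasses r A ≤ t := by
  rintro u v (huv | ⟨⟨c, hc, huc⟩, d, hd, hvd⟩)
  · exact hr huv
  · exact t.trans' (hr huc) (t.trans' (hA c hc d hd) (t.symm' (hr hvd)))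

theorem eq_of_mergeClasses_bot_of_notMem (hv : v ∉ A) (huv : mergeClasses ⊥ A u v) : u = v := by
  rcases huv with huv | ⟨-, d, hd, rfl⟩
  · exact huv
  · exact absurd hd hv

/-- The union of the non-singleton classes of `α`. -/
def nonSingletonPoints (α : Setoid S) : Set S :=
  {u | ∃ v, v ≠ u ∧ α u v}

theorem sup_le_mergeClasses_nonSingletonPoints (α r : Setoid S) :
    α ⊔ r ≤ mergeClasses r (nonSingletonPoints α) := by
  refine sup_le (fun u v huv => ?_) le_mergeClasses
  obtain rfl | hne := eq_or_ne u v
  · exact Setoid.refl' _ u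
  · exact mergeClasses_of_mem ⟨v, hne.symm, huv⟩ ⟨u, hne, α.symm' huv⟩

theorem HasAtMostOneNonSingletonClass.isModularElement (hα : HasAtMostOneNonSingletonClass α) :
    IsModularElement α := by
  refine isModularElement_iff_sup_inf_le.2 fun y z hyz a b hab => ?_
  obtain ⟨hsup, hz⟩ := Setoid.inf_iff_and.1 hab
  have y_le : y ≤ (α ⊓ z) ⊔ y := le_sup_right
  have inf_le : α ⊓ z ≤ (α ⊓ z) ⊔ y := le_sup_left
  rcases mergeClasses_apply.1 (sup_le_mergeClasses_nonSingletonPoints α y hsup) with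
    hy | ⟨⟨u, hu, hau⟩, v, hv, hbv⟩
  · exact y_le hy
  · have huv : (α ⊓ z) u v := Setoid.inf_iff_and.2
      ⟨hα u v hu hv, z.trans' (z.symm' (hyz hau)) (z.trans' hz (hyz hbv))⟩
    exact Setoid.trans' _ (y_le hau) (Setoid.trans' _ (inf_le huv) (y_le (y.symm' hbv)))

theorem sup_mergeClasses_pair {a a' b b' : S} (ha : α a a') (hb : α b b') :
    (α ⊔ mergeClasses r {a', b'}) a b := by
  have α_le : α ≤ α ⊔ mergeClasses r {a', b'} := le_sup_left
  have merge_le : mergeClasses r {a', b'} ≤ α ⊔ mergeClasses r {a', b'} := le_sup_right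
  have hab' : mergeClasses r {a', b'} a' b' := mergeClasses_of_mem (by simp) (by simp)
  exact Setoid.trans' _ (α_le ha) (Setoid.trans' _ (merge_le hab') (α_le (α.symm' hb)))

theorem inf_mergeClasses_mergeClasses_bot_le {B : Set S} (hAB : Disjoint B A)
    (hB : ∀ u ∈ B, ∀ v ∈ B, α u v → u = v) :
    α ⊓ mergeClasses (mergeClasses ⊥ A) B ≤ mergeClasses ⊥ A := by
  intro u v huv
  obtain ⟨hα, hA | ⟨⟨c, hc, huc⟩, d, hd, hvd⟩⟩ := Setoid.inf_iff_and.1 huv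
  · exact hA
  · obtain rfl := eq_of_mergeClasses_bot_of_notMem (hAB.notMem_of_mem_left hc) huc
    obtain rfl := eq_of_mergeClasses_bot_of_notMem (hAB.notMem_of_mem_left hd) hvd
    exact hB u hc v hd hα ▸ Setoid.refl' _ u

theorem IsModularElement.hasAtMostOneNonSingletonClass (hα : IsModularElement α) :
    HasAtMostOneNonSingletonClass α := by
  rintro a b ⟨a', ha, haa'⟩ ⟨b', hb, hbb'⟩
  by_contra hab
  have hba : ¬ α b a := fun h => hab (α.symm' h)
  have hab' : a ≠ b' := by rintro rfl; exact hba hbb'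
  have hba' : b ≠ a' := by rintro rfl; exact hab haa'
  let y := mergeClasses ⊥ {a', b'}
  let z := mergeClasses y {a, b}
  have hdisj : Disjoint ({a, b} : Set S) {a', b'} := by
    simp [ha, hb, hab'.symm, hba'.symm]
  have hinf : α ⊓ z ≤ y :=
    inf_mergeClasses_mergeClasses_bot_le hdisj (by simp [hab, hba])
  have hab_sup : (α ⊔ y) a b := sup_mergeClasses_pair haa' hbb'
  have hsup : z ≤ α ⊔ y := mergeClasses_le le_sup_right <| by
    simp [hab_sup, Setoid.symm' _ hab_sup]
  have hyz : y = z := hα.eq_of_le_of_inf_le_of_le_sup le_mergeClasses hinf hsup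
  have hy : y a b := hyz ▸ mergeClasses_of_mem (by simp) (by simp)
  have hab_eq : a = b :=
    eq_of_mergeClasses_bot_of_notMem (hdisj.notMem_of_mem_left (by simp)) hy
  exact hab (hab_eq ▸ α.refl' a)

end Setoid

/-- An equivalence relation `α` on a non-empty set `S` is a modular element of the
lattice `Eq(S)` of all equivalence relations on `S` if and only if `α` has at most one
non-singleton class. -/
theorem isModularElement_setoid_iff {S : Type*} [Nonempty S] (α : Setoid S) :
    IsModularElement α ↔ HasAtMostOneNonSingletonClass α :=
  ⟨IsModularElement.hasAtMostOneNonSingletonClass,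
    HasAtMostOneNonSingletonClass.isModularElement⟩
end

section
/- Let S be a non-empty set and let α be an equivalence relation on S. Then α is a modular element of the lattice Eq(S) of all equivalence relations on S if and only if α is an upper-modular element of Eq(S). -/
/-!
Both properties say that `α` has at most one class with more than one element.

If `C` is the only such class, then a path witnessing `(w ⊔ z) s t` with `w ≤ α` can be shortcut
between its first and last visits to `C`, provided `w` contains `z` restricted to `C`; this
description of the join gives both modular laws.

Conversely, let `{a, b}` and `{c, d}` be pairs in different classes of `α`, and let `ζ` be the
equivalence relation with nontrivial classes `{a, c}` and `{b, d}`, so that `α ⊓ ζ = ⊥`. Identifying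
`a` with `c` modulo `α` identifies `b` with `d`, and identifying `a` with `b` modulo `ζ`
identifies `c` with `d`: the first contradicts modularity and the second upper-modularity.
-/

section Lattice

variable {L : Type*} [Lattice L] {x y z : L}

theorem isModularElement_of_forall_le
    (h : ∀ y z : L, y ≤ z → (x ⊔ y) ⊓ z ≤ (x ⊓ z) ⊔ y) : IsModularElement x :=
  fun y z hyz ↦ (h y z hyz).antisymm <|
    sup_le (inf_le_inf_right z le_sup_left) (le_inf le_sup_right hyz)

theorem isUpperModularElement_of_forall_le
    (h : ∀ y z : L, y ≤ x → x ⊓ (y ⊔ z) ≤ y ⊔ (x ⊓ z)) : IsUpperModularElement x :=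
  fun y z hyx ↦ (h y z hyx).antisymm <|
    sup_le (le_inf hyx le_sup_left) (inf_le_inf_left x le_sup_right)

theorem IsModularElement.sup_inf_eq_of_disjoint [OrderBot L] (hx : IsModularElement x)
    (hxz : Disjoint x z) (hyz : y ≤ z) : (x ⊔ y) ⊓ z = y := by
  rw [hx y z hyz, hxz.eq_bot, bot_sup_eq]

theorem IsUpperModularElement.inf_sup_eq_of_disjoint [OrderBot L] (hx : IsUpperModularElement x)
    (hxz : Disjoint x z) (hyx : y ≤ x) : x ⊓ (y ⊔ z) = y := by
  rw [hx y z hyx, hxz.eq_bot, sup_bot_eq]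

end Lattice

section Collapse

variable {S : Type*}

/-- The equivalence relation that identifies all elements of `C` with each other and nothing else.
The relations of this form are those with at most one nontrivial class. -/
def collapseSet (C : Set S) : Setoid S where
  r s t := s = t ∨ s ∈ C ∧ t ∈ C
  iseqv := ⟨fun _ ↦ .inl rfl, by grind, by grind⟩

theorem collapseSet_apply {C : Set S} {s t : S} : collapseSet C s t ↔ s = t ∨ s ∈ C ∧ t ∈ C :=
  Iff.rfl

theorem collapseSet_of_mem {C : Set S} {s t : S} (hs : s ∈ C) (ht : t ∈ C) : collapseSet C s t :=
  .inr ⟨hs, ht⟩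

theorem collapseSet_pair_le_iff {x : Setoid S} {a b : S} : collapseSet {a, b} ≤ x ↔ x a b := by
  refine ⟨fun h ↦ h (collapseSet_of_mem (by simp) (by simp)), fun hab s t hst ↦ ?_⟩
  rcases hst with rfl | ⟨rfl | rfl, rfl | rfl⟩
  exacts [x.refl _, x.refl _, hab, x.symm hab, x.refl _]

theorem exists_eq_collapseSet_of_forall_rel {x : Setoid S}
    (h : ∀ a b c d, x a b → a ≠ b → x c d → c ≠ d → x a c) : ∃ C, x = collapseSet C := by
  refine ⟨{a | ∃ b, x a b ∧ a ≠ b}, Setoid.ext fun s t ↦ ⟨fun hst ↦ ?_, ?_⟩⟩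
  · exact or_iff_not_imp_left.2 fun hne ↦ ⟨⟨t, hst, hne⟩, s, x.symm hst, Ne.symm hne⟩
  · rintro (rfl | ⟨⟨s', hs, hss'⟩, t', ht, htt'⟩)
    · exact x.refl s
    · exact h s s' t t' hs hss' ht htt'

theorem sup_apply_of_le_collapseSet {C : Set S} {w z : Setoid S} (hw : w ≤ collapseSet C)
    (hzw : collapseSet C ⊓ z ≤ w) {s t : S} :
    (w ⊔ z) s t ↔ z s t ∨ ∃ c ∈ C, ∃ d ∈ C, z s c ∧ w c d ∧ z d t := by
  let shortcut : Setoid S :=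
    { r s t := z s t ∨ ∃ c ∈ C, ∃ d ∈ C, z s c ∧ w c d ∧ z d t
      iseqv := by
        refine ⟨fun s ↦ .inl (z.refl s), ?_, ?_⟩
        · rintro s t (hst | ⟨c, hc, d, hd, hsc, hcd, hdt⟩)
          · exact .inl (z.symm hst)
          · exact .inr ⟨d, hd, c, hc, z.symm hdt, w.symm hcd, z.symm hsc⟩
        · rintro s t u (hst | ⟨c, hc, d, hd, hsc, hcd, hdt⟩)
            (htu | ⟨c', hc', d', hd', htc', hcd', hdu'⟩)
          · exact .inl (z.trans hst htu)
          · exact .inr ⟨c', hc', d', hd', z.trans hst htc', hcd', hdu'⟩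
          · exact .inr ⟨c, hc, d, hd, hsc, hcd, z.trans hdt htu⟩
          · have hdc' : w d c' := hzw ⟨collapseSet_of_mem hd hc', z.trans hdt htc'⟩
            exact .inr ⟨c, hc, d', hd', hsc, w.trans hcd (w.trans hdc' hcd'), hdu'⟩ }
  have hw_sup : w ≤ w ⊔ z := le_sup_left
  have hz_sup : z ≤ w ⊔ z := le_sup_right
  constructor
  · have w_le : w ≤ shortcut := fun s t hst ↦ by
      rcases hw hst with rfl | ⟨hs, ht⟩
      · exact shortcut.refl s
      · exact .inr ⟨s, hs, t, ht, z.refl s, hst, z.refl t⟩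
    have z_le : z ≤ shortcut := fun _ _ ↦ .inl
    exact fun hst ↦ sup_le w_le z_le hst
  · rintro (hst | ⟨c, -, d, -, hsc, hcd, hdt⟩)
    · exact hz_sup hst
    · exact (w ⊔ z).trans (hz_sup hsc) ((w ⊔ z).trans (hw_sup hcd) (hz_sup hdt))

theorem collapseSet_sup_collapseSet_apply {C D : Set S} (hCD : Disjoint C D) {s t : S} :
    (collapseSet C ⊔ collapseSet D) s t ↔ s = t ∨ s ∈ C ∧ t ∈ C ∨ s ∈ D ∧ t ∈ D := by
  have hCD' := Set.disjoint_left.1 hCD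
  simp only [sup_apply_of_le_collapseSet le_rfl inf_le_left, collapseSet_apply]
  grind

theorem isModularElement_collapseSet (C : Set S) : IsModularElement (collapseSet C) := by
  refine isModularElement_of_forall_le fun y z hyz s t ⟨hst, hz⟩ ↦ ?_
  have hy : y ≤ (collapseSet C ⊓ z) ⊔ y := le_sup_right
  have hCz : collapseSet C ⊓ z ≤ (collapseSet C ⊓ z) ⊔ y := le_sup_left
  rcases (sup_apply_of_le_collapseSet le_rfl inf_le_left).1 hst with
    hst | ⟨c, -, d, -, hsc, hcd, hdt⟩
  · exact hy hst
  · have hzcd : z c d := z.trans (z.symm (hyz hsc)) (z.trans hz (z.symm (hyz hdt)))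
    exact Setoid.trans' _ (hy hsc) (Setoid.trans' _ (hCz ⟨hcd, hzcd⟩) (hy hdt))

theorem isUpperModularElement_collapseSet (C : Set S) : IsUpperModularElement (collapseSet C) := by
  refine isUpperModularElement_of_forall_le fun y z hy s t ⟨hCst, hst⟩ ↦ ?_
  set w := y ⊔ (collapseSet C ⊓ z)
  have hw : w ≤ collapseSet C := sup_le hy inf_le_left
  have hzw : collapseSet C ⊓ z ≤ w := le_sup_right
  have hwz : (w ⊔ z) s t := sup_le_sup_right le_sup_left z hst
  rcases hCst with rfl | ⟨hs, ht⟩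
  · exact w.refl s
  rcases (sup_apply_of_le_collapseSet hw hzw).1 hwz with hst | ⟨c, hc, d, hd, hsc, hcd, hdt⟩
  · exact hzw ⟨collapseSet_of_mem hs ht, hst⟩
  · have hwsc : w s c := hzw ⟨collapseSet_of_mem hs hc, hsc⟩
    have hwdt : w d t := hzw ⟨collapseSet_of_mem hd ht, hdt⟩
    exact w.trans hwsc (w.trans hcd hwdt)

end Collapse

section AtMostOneClass

variable {S : Type*} {x : Setoid S} {a b c d : S}

theorem disjoint_collapseSet_sup_collapseSet {C D : Set S} (hCD : Disjoint C D)
    (hC : Disjoint x (collapseSet C)) (hD : Disjoint x (collapseSet D)) :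
    Disjoint x (collapseSet C ⊔ collapseSet D) := by
  refine disjoint_iff_inf_le.2 fun s t ⟨hx, hst⟩ ↦ ?_
  rcases (collapseSet_sup_collapseSet_apply hCD).1 hst with rfl | hst | hst
  · exact Setoid.refl' _ s
  · exact hC.le_bot ⟨hx, .inr hst⟩
  · exact hD.le_bot ⟨hx, .inr hst⟩

theorem disjoint_collapseSet_pair (hac : ¬x a c) : Disjoint x (collapseSet {a, c}) := by
  refine disjoint_iff_inf_le.2 fun s t ⟨hx, hst⟩ ↦ ?_
  rcases hst with rfl | ⟨rfl | rfl, rfl | rfl⟩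
  exacts [rfl, rfl, (hac hx).elim, (hac (x.symm hx)).elim, rfl]

theorem disjoint_collapseSet_pair_sup_pair (hab : x a b) (hne : a ≠ b) (hcd : x c d) (hne' : c ≠ d)
    (hac : ¬x a c) : Disjoint x (collapseSet {a, c} ⊔ collapseSet {b, d}) := by
  have hbd : ¬x b d := fun h ↦ hac (x.trans hab (x.trans h (x.symm hcd)))
  have had : a ≠ d := by rintro rfl; exact hac (x.symm hcd)
  have hcb : c ≠ b := by rintro rfl; exact hac hab
  have hpairs : Disjoint ({a, c} : Set S) {b, d} := by
    simp [hne.symm, hne'.symm, had.symm, hcb.symm]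
  exact disjoint_collapseSet_sup_collapseSet hpairs (disjoint_collapseSet_pair hac)
    (disjoint_collapseSet_pair hbd)

theorem IsModularElement.exists_eq_collapseSet (hx : IsModularElement x) :
    ∃ C, x = collapseSet C := by
  refine exists_eq_collapseSet_of_forall_rel fun a b c d hab hne hcd hne' ↦ ?_
  by_contra hac
  have hbc : b ≠ c := by rintro rfl; exact hac hab
  have hbd : b ≠ d := by rintro rfl; exact hac (x.trans hab (x.symm hcd))
  set ζ := collapseSet {a, c} ⊔ collapseSet {b, d}
  have hxζ : Disjoint x ζ := disjoint_collapseSet_pair_sup_pair hab hne hcd hne' hac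
  have hζbd : ζ b d := collapseSet_pair_le_iff.1 le_sup_right
  have hx_le : x ≤ x ⊔ collapseSet {a, c} := le_sup_left
  have hsup_ac : (x ⊔ collapseSet {a, c}) a c := collapseSet_pair_le_iff.1 le_sup_right
  have hsup_bd : (x ⊔ collapseSet {a, c}) b d :=
    Setoid.trans' _ (hx_le (x.symm hab)) (Setoid.trans' _ hsup_ac (hx_le hcd))
  have hcollapse : collapseSet {a, c} b d :=
    (hx.sup_inf_eq_of_disjoint hxζ le_sup_left).le ⟨hsup_bd, hζbd⟩
  simp [collapseSet_apply, hbd, hne.symm, hbc] at hcollapse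

theorem IsUpperModularElement.exists_eq_collapseSet (hx : IsUpperModularElement x) :
    ∃ C, x = collapseSet C := by
  refine exists_eq_collapseSet_of_forall_rel fun a b c d hab hne hcd hne' ↦ ?_
  by_contra hac
  have hca : c ≠ a := by rintro rfl; exact hac (x.refl c)
  have hcb : c ≠ b := by rintro rfl; exact hac hab
  set ζ := collapseSet {a, c} ⊔ collapseSet {b, d}
  have hxζ : Disjoint x ζ := disjoint_collapseSet_pair_sup_pair hab hne hcd hne' hac
  have hζac : ζ a c := collapseSet_pair_le_iff.1 le_sup_left
  have hζbd : ζ b d := collapseSet_pair_le_iff.1 le_sup_right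
  have hζ_le : ζ ≤ collapseSet {a, b} ⊔ ζ := le_sup_right
  have hsup_ab : (collapseSet {a, b} ⊔ ζ) a b := collapseSet_pair_le_iff.1 le_sup_left
  have hsup_cd : (collapseSet {a, b} ⊔ ζ) c d :=
    Setoid.trans' _ (hζ_le (ζ.symm hζac)) (Setoid.trans' _ hsup_ab (hζ_le hζbd))
  have hcollapse : collapseSet {a, b} c d :=
    (hx.inf_sup_eq_of_disjoint hxζ (collapseSet_pair_le_iff.2 hab)).le ⟨hcd, hsup_cd⟩
  simp [collapseSet_apply, hne', hca, hcb] at hcollapse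

theorem isModularElement_iff_exists_eq_collapseSet :
    IsModularElement x ↔ ∃ C, x = collapseSet C :=
  ⟨IsModularElement.exists_eq_collapseSet, fun ⟨C, hC⟩ ↦ hC ▸ isModularElement_collapseSet C⟩

theorem isUpperModularElement_iff_exists_eq_collapseSet :
    IsUpperModularElement x ↔ ∃ C, x = collapseSet C :=
  ⟨IsUpperModularElement.exists_eq_collapseSet,
    fun ⟨C, hC⟩ ↦ hC ▸ isUpperModularElement_collapseSet C⟩

end AtMostOneClass

/-- An equivalence relation `α` on a non-empty set `S` is a modular element of the
lattice `Eq(S)` of all equivalence relations on `S` if and only if it is an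
upper-modular element of `Eq(S)`. -/
theorem isModularElement_setoid_iff_isUpperModularElement {S : Type*} [Nonempty S]
    (α : Setoid S) : IsModularElement α ↔ IsUpperModularElement α := by
  exact isModularElement_iff_exists_eq_collapseSet.trans
    isUpperModularElement_iff_exists_eq_collapseSet.symm
end

section
/- Let L be a lattice with a least element ⊥ and let a ∈ L be an atom of L that is also a neutral element of L. Then an element x ∈ L is a modular element of L if and only if x ⊔ a is a modular element of L. -/
/-- An element `x` of a lattice `L` is neutral if for all `y, z ∈ L` one has
`(x ⊔ y) ⊓ (y ⊔ z) ⊓ (z ⊔ x) = (x ⊓ y) ⊔ (y ⊓ z) ⊔ (z ⊓ x)`. -/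
def IsNeutralElement {L : Type*} [Lattice L] (x : L) : Prop :=
  ∀ y z : L, (x ⊔ y) ⊓ (y ⊔ z) ⊓ (z ⊔ x) = (x ⊓ y) ⊔ (y ⊓ z) ⊔ (z ⊓ x)

/-!
If `a` is neutral, then `x ↦ (x ⊓ a, x ⊔ a)` embeds the lattice into the product of the intervals
below and above `a`, so the modular law for `x` can be tested on the two components. Testing it on
the first component amounts to `x ⊓ a` being modular, and on the second to `x ⊔ a` being modular.
If `a` is an atom, then `x ⊓ a` is `⊥` or `a`, and both are modular.
-/

section Lattice

variable {L : Type*} [Lattice L] {a x : L}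

open OrderDual

theorem IsNeutralElement.dual (hn : IsNeutralElement a) : IsNeutralElement (toDual a) :=
  fun y z ↦ (hn (ofDual y) (ofDual z)).symm

theorem IsNeutralElement.isModularElement (hn : IsNeutralElement a) : IsModularElement a := by
  intro y z hyz
  calc (a ⊔ y) ⊓ z
      = (a ⊔ y) ⊓ (y ⊔ z) ⊓ (z ⊔ a) := by
        rw [sup_eq_right.2 hyz, inf_assoc, inf_sup_self]
    _ = a ⊓ y ⊔ y ⊓ z ⊔ z ⊓ a := hn y z
    _ = a ⊓ z ⊔ y := by
        rw [inf_eq_left.2 hyz, sup_of_le_right (inf_le_right : a ⊓ y ≤ y), inf_comm z, sup_comm]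

theorem IsNeutralElement.le_of_inf_le_sup_le (hn : IsNeutralElement a) {y z : L}
    (hinf : y ⊓ a ≤ z ⊓ a) (hsup : y ⊔ a ≤ z ⊔ a) : y ≤ z :=
  calc y ≤ (a ⊔ z) ⊓ (z ⊔ y) ⊓ (y ⊔ a) :=
        le_inf (le_inf (le_sup_left.trans (hsup.trans_eq (sup_comm z a))) le_sup_right) le_sup_left
    _ = a ⊓ z ⊔ z ⊓ y ⊔ y ⊓ a := hn z y
    _ ≤ z := sup_le (sup_le inf_le_right inf_le_left) (hinf.trans inf_le_left)

theorem IsNeutralElement.eq_of_inf_eq_sup_eq (hn : IsNeutralElement a) {y z : L}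
    (hinf : y ⊓ a = z ⊓ a) (hsup : y ⊔ a = z ⊔ a) : y = z :=
  le_antisymm (hn.le_of_inf_le_sup_le hinf.le hsup.le) (hn.le_of_inf_le_sup_le hinf.ge hsup.ge)

protected theorem IsNeutralElement.sup_inf_right (hn : IsNeutralElement a) (y z : L) :
    y ⊓ z ⊔ a = (y ⊔ a) ⊓ (z ⊔ a) := by
  refine le_antisymm (le_inf (sup_le_sup_right inf_le_left a) (sup_le_sup_right inf_le_right a)) ?_
  set u := (y ⊔ a) ⊓ (z ⊔ a) with hu
  have inf_u : (y ⊔ z) ⊓ u = a ⊓ y ⊔ y ⊓ z ⊔ z ⊓ a := by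
    rw [← hn y z, hu, sup_comm y a, inf_left_comm, inf_assoc]
  calc u ≤ (a ⊔ (y ⊔ z)) ⊓ ((y ⊔ z) ⊔ u) ⊓ (u ⊔ a) :=
        le_inf (le_inf (inf_le_left.trans (sup_le (le_sup_left.trans le_sup_right) le_sup_left))
          le_sup_right) le_sup_left
    _ = a ⊓ (y ⊔ z) ⊔ (y ⊔ z) ⊓ u ⊔ u ⊓ a := hn (y ⊔ z) u
    _ ≤ (y ⊔ z) ⊓ u ⊔ a :=
        sup_le (sup_le (inf_le_left.trans le_sup_right) le_sup_left)
          (inf_le_right.trans le_sup_right)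
    _ = a ⊓ y ⊔ y ⊓ z ⊔ z ⊓ a ⊔ a := by rw [inf_u]
    _ ≤ y ⊓ z ⊔ a :=
        sup_le (sup_le (sup_le (inf_le_left.trans le_sup_right) le_sup_left)
          (inf_le_right.trans le_sup_right)) le_sup_right

protected theorem IsNeutralElement.inf_sup_right (hn : IsNeutralElement a) (y z : L) :
    (y ⊔ z) ⊓ a = y ⊓ a ⊔ z ⊓ a :=
  hn.dual.sup_inf_right (toDual y) (toDual z)

theorem isModularElement_toDual_iff : IsModularElement (toDual x) ↔ IsModularElement x :=
  ⟨fun h y z hyz ↦ (h (toDual z) (toDual y) hyz).symm,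
    fun h y z hyz ↦ (h (ofDual z) (ofDual y) hyz).symm⟩

theorem IsNeutralElement.isModularElement_inf_iff (hn : IsNeutralElement a) :
    IsModularElement (x ⊓ a) ↔ ∀ y z, y ≤ z → (x ⊔ y) ⊓ z ⊓ a = (x ⊓ z ⊔ y) ⊓ a := by
  have absorb (v w : L) : (v ⊓ a ⊔ w) ⊓ a = (v ⊔ w) ⊓ a := by
    rw [hn.inf_sup_right, inf_assoc, inf_idem, ← hn.inf_sup_right]
  have left_inf (y z : L) : (x ⊓ a ⊔ y) ⊓ z ⊓ a = (x ⊔ y) ⊓ z ⊓ a := by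
    rw [inf_right_comm, absorb, inf_right_comm]
  have right_inf (y z : L) : (x ⊓ a ⊓ z ⊔ y) ⊓ a = (x ⊓ z ⊔ y) ⊓ a := by
    rw [inf_right_comm, absorb]
  have left_sup {y z : L} (hyz : y ≤ z) : (x ⊓ a ⊔ y) ⊓ z ⊔ a = y ⊔ a := by
    rw [hn.sup_inf_right, sup_assoc, sup_eq_right.2 (inf_le_right.trans le_sup_right),
      inf_eq_left.2 (sup_le_sup_right hyz a)]
  have right_sup (y z : L) : x ⊓ a ⊓ z ⊔ y ⊔ a = y ⊔ a := by
    rw [sup_assoc, sup_eq_right.2 (inf_le_left.trans (inf_le_right.trans le_sup_right))]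
  refine forall₃_congr fun y z hyz ↦ ⟨fun h ↦ ?_, fun h ↦ hn.eq_of_inf_eq_sup_eq ?_ ?_⟩
  · rw [← left_inf, h, right_inf]
  · rw [left_inf, h, right_inf]
  · rw [left_sup hyz, right_sup]

theorem IsNeutralElement.isModularElement_sup_iff (hn : IsNeutralElement a) :
    IsModularElement (x ⊔ a) ↔ ∀ y z, y ≤ z → (x ⊔ y) ⊓ z ⊔ a = x ⊓ z ⊔ y ⊔ a := by
  rw [← isModularElement_toDual_iff, toDual_sup, hn.dual.isModularElement_inf_iff]
  exact ⟨fun h y z hyz ↦ (h (toDual z) (toDual y) hyz).symm,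
    fun h y z hyz ↦ (h (ofDual z) (ofDual y) hyz).symm⟩

theorem isModularElement_sup_atom_iff_general (hn : IsNeutralElement a) :
    IsModularElement x ↔ IsModularElement (x ⊓ a) ∧ IsModularElement (x ⊔ a) := by
  rw [hn.isModularElement_inf_iff, hn.isModularElement_sup_iff]
  constructor
  · intro hx
    exact ⟨fun y z hyz ↦ congrArg (· ⊓ a) (hx y z hyz), fun y z hyz ↦ congrArg (· ⊔ a) (hx y z hyz)⟩
  · rintro ⟨hinf, hsup⟩ y z hyz
    exact hn.eq_of_inf_eq_sup_eq (hinf y z hyz) (hsup y z hyz)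

end Lattice

section OrderBot

variable {L : Type*} [Lattice L] [OrderBot L] {a : L}

theorem isModularElement_bot : IsModularElement (⊥ : L) := by
  intro y z hyz
  rw [bot_sup_eq, bot_inf_eq, bot_sup_eq, inf_eq_left.2 hyz]

theorem IsNeutralElement.isModularElement_inf_of_isAtom (hn : IsNeutralElement a) (ha : IsAtom a)
    (x : L) : IsModularElement (x ⊓ a) := by
  rcases ha.le_iff.1 (inf_le_right : x ⊓ a ≤ a) with h | h <;> rw [h]
  exacts [isModularElement_bot, hn.isModularElement]

end OrderBot

/-- If `a` is an atom and a neutral element of a lattice `L` with least element, then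
an element `x ∈ L` is a modular element of `L` if and only if `x ⊔ a` is. -/
theorem isModularElement_sup_atom_iff {L : Type*} [Lattice L] [OrderBot L] (a : L)
    (ha : IsAtom a) (hn : IsNeutralElement a) (x : L) :
    IsModularElement x ↔ IsModularElement (x ⊔ a) := by
  rw [isModularElement_sup_atom_iff_general hn]
  exact and_iff_right (hn.isModularElement_inf_of_isAtom ha x)
end

section
/- Let L be a lattice with a least element ⊥ and let a ∈ L be an atom of L that is also a neutral element of L. Then an element x ∈ L is a lower-modular element of L if and only if x ⊔ a is a lower-modular element of L. -/
def IsLowerModularElement {L : Type*} [Lattice L] (x : L) : Prop :=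
  ∀ y z : L, x ≤ y → x ⊔ (y ⊓ z) = y ⊓ (x ⊔ z)

/-!
For a neutral element `a` the maps `(· ⊓ a)` and `(· ⊔ a)` are lattice homomorphisms that jointly
separate the elements of `L`. Lower-modularity of `x` therefore splits into lower-modularity of
`x ⊓ a` in the ideal `Set.Iic a` and lower-modularity of `x ⊔ a`. If `a` is an atom, the ideal has
only two elements, so the first condition always holds.
-/

section

variable {L : Type*} [Lattice L]

namespace IsNeutralElement

open OrderDual

variable {a : L}

theorem dual_s6 (hn : IsNeutralElement a) : IsNeutralElement (toDual a) :=
  fun y z ↦ (hn (ofDual y) (ofDual z)).symm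

theorem inf_sup_le_inf_sup (hn : IsNeutralElement a) (y z : L) : y ⊓ (z ⊔ a) ≤ y ⊓ z ⊔ a :=
  calc
    y ⊓ (z ⊔ a) ≤ (a ⊔ y) ⊓ (y ⊔ z) ⊓ (z ⊔ a) :=
      inf_le_inf_right _ (le_inf le_sup_right le_sup_left)
    _ = a ⊓ y ⊔ y ⊓ z ⊔ z ⊓ a := hn y z
    _ ≤ y ⊓ z ⊔ a :=
      sup_le (sup_le (inf_le_left.trans le_sup_right) le_sup_left) (inf_le_right.trans le_sup_right)

theorem sup_inf_right_s6 (hn : IsNeutralElement a) (y z : L) : y ⊓ z ⊔ a = (y ⊔ a) ⊓ (z ⊔ a) := by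
  refine le_antisymm (le_inf (sup_le_sup_right inf_le_left a) (sup_le_sup_right inf_le_right a)) ?_
  calc
    (y ⊔ a) ⊓ (z ⊔ a) ≤ (y ⊔ a) ⊓ z ⊔ a := hn.inf_sup_le_inf_sup _ _
    _ ≤ y ⊓ z ⊔ a := sup_le (by simpa only [inf_comm] using hn.inf_sup_le_inf_sup z y) le_sup_right

theorem inf_sup_right_s6 (hn : IsNeutralElement a) (y z : L) : (y ⊔ z) ⊓ a = y ⊓ a ⊔ z ⊓ a :=
  hn.dual_s6.sup_inf_right_s6 (toDual y) (toDual z)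

theorem le_of_inf_le_sup_le_s6 (hn : IsNeutralElement a) {p q : L} (hinf : p ⊓ a ≤ q ⊓ a)
    (hsup : p ⊔ a ≤ q ⊔ a) : p ≤ q :=
  calc
    p ≤ (a ⊔ q) ⊓ (q ⊔ p) ⊓ (p ⊔ a) :=
      le_inf (le_inf (le_sup_left.trans (hsup.trans_eq (sup_comm q a))) le_sup_right) le_sup_left
    _ = a ⊓ q ⊔ q ⊓ p ⊔ p ⊓ a := hn q p
    _ ≤ q := sup_le (sup_le inf_le_right inf_le_left) (hinf.trans inf_le_left)

theorem eq_of_inf_eq_sup_eq_s6 (hn : IsNeutralElement a) {p q : L} (hinf : p ⊓ a = q ⊓ a)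
    (hsup : p ⊔ a = q ⊔ a) : p = q :=
  (hn.le_of_inf_le_sup_le_s6 hinf.le hsup.le).antisymm (hn.le_of_inf_le_sup_le_s6 hinf.ge hsup.ge)

theorem isLowerModularElement_sup (hn : IsNeutralElement a) {x : L}
    (hx : IsLowerModularElement x) : IsLowerModularElement (x ⊔ a) := by
  intro y z hxy
  have hay : y ⊔ a = y := sup_eq_left.2 (le_sup_right.trans hxy)
  calc
    x ⊔ a ⊔ y ⊓ z = x ⊔ y ⊓ z ⊔ a := sup_right_comm _ _ _
    _ = y ⊓ (x ⊔ z) ⊔ a := by rw [hx y z (le_sup_left.trans hxy)]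
    _ = y ⊓ (x ⊔ a ⊔ z) := by rw [hn.sup_inf_right_s6, hay, sup_right_comm]

theorem isLowerModularElement_inf (hn : IsNeutralElement a) {x : L}
    (hx : IsLowerModularElement x) :
    IsLowerModularElement (⟨x ⊓ a, inf_le_right⟩ : Set.Iic a) := by
  rintro ⟨y, hya : y ≤ a⟩ ⟨z, hza : z ≤ a⟩ (hxy : x ⊓ a ≤ y)
  refine Subtype.ext (?_ : x ⊓ a ⊔ y ⊓ z = y ⊓ (x ⊓ a ⊔ z))
  have hy : (x ⊔ y) ⊓ a = y := by
    rw [hn.inf_sup_right_s6, inf_eq_left.2 hya, sup_eq_right.2 hxy]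
  have hz : z ⊓ a = z := inf_eq_left.2 hza
  calc
    x ⊓ a ⊔ y ⊓ z = (x ⊔ (x ⊔ y) ⊓ z) ⊓ a := by
      rw [hn.inf_sup_right_s6, inf_inf_distrib_right, hy, hz]
    _ = (x ⊔ y) ⊓ (x ⊔ z) ⊓ a := by rw [hx (x ⊔ y) z le_sup_left]
    _ = y ⊓ (x ⊓ a ⊔ z) := by rw [inf_inf_distrib_right, hy, hn.inf_sup_right_s6, hz]

theorem isLowerModularElement_of_inf_of_sup (hn : IsNeutralElement a) {x : L}
    (hinf : IsLowerModularElement (⟨x ⊓ a, inf_le_right⟩ : Set.Iic a))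
    (hsup : IsLowerModularElement (x ⊔ a)) : IsLowerModularElement x := by
  intro y z hxy
  apply hn.eq_of_inf_eq_sup_eq_s6
  · have hIic : x ⊓ a ⊔ y ⊓ a ⊓ (z ⊓ a) = y ⊓ a ⊓ (x ⊓ a ⊔ z ⊓ a) :=
      congrArg Subtype.val <|
        hinf ⟨y ⊓ a, inf_le_right⟩ ⟨z ⊓ a, inf_le_right⟩ (inf_le_inf_right a hxy)
    calc
      (x ⊔ y ⊓ z) ⊓ a = x ⊓ a ⊔ y ⊓ a ⊓ (z ⊓ a) := by
        rw [hn.inf_sup_right_s6, inf_inf_distrib_right]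
      _ = y ⊓ a ⊓ (x ⊓ a ⊔ z ⊓ a) := hIic
      _ = y ⊓ (x ⊔ z) ⊓ a := by rw [← hn.inf_sup_right_s6, ← inf_inf_distrib_right]
  · calc
      x ⊔ y ⊓ z ⊔ a = x ⊔ a ⊔ (y ⊔ a) ⊓ (z ⊔ a) := by
        rw [sup_sup_distrib_right, hn.sup_inf_right_s6]
      _ = (y ⊔ a) ⊓ (x ⊔ a ⊔ (z ⊔ a)) := hsup _ _ (sup_le_sup_right hxy a)
      _ = y ⊓ (x ⊔ z) ⊔ a := by rw [← sup_sup_distrib_right, ← hn.sup_inf_right_s6]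

theorem isLowerModularElement_iff (hn : IsNeutralElement a) (x : L) :
    IsLowerModularElement x ↔
      IsLowerModularElement (⟨x ⊓ a, inf_le_right⟩ : Set.Iic a) ∧ IsLowerModularElement (x ⊔ a) :=
  ⟨fun hx ↦ ⟨hn.isLowerModularElement_inf hx, hn.isLowerModularElement_sup hx⟩,
    fun h ↦ hn.isLowerModularElement_of_inf_of_sup h.1 h.2⟩

end IsNeutralElement

theorem isLowerModularElement_of_isModularLattice [IsModularLattice L] (x : L) :
    IsLowerModularElement x := fun y z hxy ↦ by
  rw [inf_comm y z, ← sup_inf_assoc_of_le z hxy, inf_comm]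

theorem isModularLattice_of_isSimpleOrder [BoundedOrder L] [IsSimpleOrder L] :
    IsModularLattice L :=
  letI := IsSimpleOrder.distribLattice (α := L)
  inferInstanceAs (IsModularLattice L)

theorem isModularLattice_Iic_of_isAtom [OrderBot L] {a : L} (ha : IsAtom a) :
    IsModularLattice (Set.Iic a) :=
  have : IsSimpleOrder (Set.Iic a) := Set.isSimpleOrder_Iic_iff_isAtom.2 ha
  isModularLattice_of_isSimpleOrder

theorem isLowerModularElement_sup_atom_iff_general {a : L} [IsModularLattice (Set.Iic a)]
    (hn : IsNeutralElement a) (x : L) :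
    IsLowerModularElement x ↔ IsLowerModularElement (x ⊔ a) :=
  (hn.isLowerModularElement_iff x).trans <|
    and_iff_right (isLowerModularElement_of_isModularLattice _)

end

/-- If `a` is an atom and a neutral element of a lattice `L` with least element, then
an element `x ∈ L` is a lowermodular element of `L` if and only if `x ⊔ a` is. -/
theorem isLowerModularElement_sup_atom_iff {L : Type*} [Lattice L] [OrderBot L] (a : L)
    (ha : IsAtom a) (hn : IsNeutralElement a) (x : L) :
    IsLowerModularElement x ↔ IsLowerModularElement (x ⊔ a) := by
  have : IsModularLattice (Set.Iic a) := isModularLattice_Iic_of_isAtom ha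
  exact isLowerModularElement_sup_atom_iff_general hn x
end

section
/- Let L be a lattice with a least element ⊥ and let a ∈ L be an atom of L that is also a neutral element of L. Then an element x ∈ L is a distributive element of L if and only if x ⊔ a is a distributive element of L. -/
def IsDistributiveElement {L : Type*} [Lattice L] (x : L) : Prop :=
  ∀ y z : L, x ⊔ (y ⊓ z) = (x ⊔ y) ⊓ (x ⊔ z)

/-!
If `a` is neutral, then `y ↦ (a ⊓ y, a ⊔ y)` is a lattice embedding of `L` into
`Set.Iic a × Set.Ici a`, so distributivity of `x` can be tested on the two components `a ⊓ x` and
`x ⊔ a`. When `a` is an atom, `Set.Iic a` is a two-element chain, in which every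
element is distributive.
-/

theorem IsDistributiveElement.sup {L : Type*} [Lattice L] {x y : L}
    (hx : IsDistributiveElement x) (hy : IsDistributiveElement y) :
    IsDistributiveElement (x ⊔ y) := fun u v => by
  simp only [sup_assoc, hy u v, hx (y ⊔ u) (y ⊔ v)]

theorem isDistributiveElement_of_distribLattice {L : Type*} [DistribLattice L] (x : L) :
    IsDistributiveElement x :=
  sup_inf_left x

theorem isDistributiveElement_Iic_of_isAtom {L : Type*} [Lattice L] [OrderBot L] {a : L}
    (ha : IsAtom a) (u : Set.Iic a) : IsDistributiveElement u :=
  haveI := Set.isSimpleOrder_Iic_iff_isAtom.2 ha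
  letI := IsSimpleOrder.distribLattice (α := Set.Iic a)
  isDistributiveElement_of_distribLattice u

namespace IsNeutralElement

variable {L : Type*} [Lattice L] {a : L}

theorem toDual (ha : IsNeutralElement a) : IsNeutralElement (OrderDual.toDual a) :=
  fun y z => (ha (OrderDual.ofDual y) (OrderDual.ofDual z)).symm

theorem le_inf_sup_inf_sup_inf (ha : IsNeutralElement a) {y z : L} (hz : z ≤ a ⊔ y) :
    z ≤ (a ⊓ y) ⊔ (y ⊓ z) ⊔ (z ⊓ a) :=
  ha y z ▸ le_inf (le_inf hz le_sup_right) le_sup_left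

theorem le_of_le_sup_of_inf_le (ha : IsNeutralElement a) {y z : L} (hsup : z ≤ a ⊔ y)
    (hinf : a ⊓ z ≤ y) : z ≤ y :=
  (ha.le_inf_sup_inf_sup_inf hsup).trans
    (sup_le (sup_le inf_le_right inf_le_left) (inf_comm a z ▸ hinf))

theorem isDistributiveElement (ha : IsNeutralElement a) : IsDistributiveElement a := by
  intro y z
  refine le_antisymm sup_inf_le ?_
  set u := (a ⊔ y) ⊓ (a ⊔ z)
  have u_le : u ≤ a ⊔ (y ⊔ z) := inf_le_left.trans (sup_le_sup_left le_sup_left a)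
  have inf_u_le : (y ⊔ z) ⊓ u ≤ a ⊔ (y ⊓ z) := calc
    (y ⊔ z) ⊓ u = (a ⊔ y) ⊓ (y ⊔ z) ⊓ (z ⊔ a) := by
      rw [sup_comm z a, inf_right_comm, inf_comm]
    _ = (a ⊓ y) ⊔ (y ⊓ z) ⊔ (z ⊓ a) := ha y z
    _ ≤ a ⊔ (y ⊓ z) :=
      sup_le (sup_le_sup_right inf_le_left _) (inf_le_right.trans le_sup_left)
  calc
    u ≤ (a ⊓ (y ⊔ z)) ⊔ ((y ⊔ z) ⊓ u) ⊔ (u ⊓ a) := ha.le_inf_sup_inf_sup_inf u_le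
    _ ≤ a ⊔ (y ⊓ z) :=
      sup_le (sup_le (inf_le_left.trans le_sup_left) inf_u_le) (inf_le_right.trans le_sup_left)

theorem inf_sup_left (ha : IsNeutralElement a) (y z : L) :
    a ⊓ (y ⊔ z) = (a ⊓ y) ⊔ (a ⊓ z) :=
  ha.toDual.isDistributiveElement (OrderDual.toDual y) (OrderDual.toDual z)

theorem isDistributiveElement_Iic_inf (ha : IsNeutralElement a) {x : L}
    (hx : IsDistributiveElement x) :
    IsDistributiveElement (⟨a ⊓ x, inf_le_left⟩ : Set.Iic a) := by
  rintro ⟨u, hu : u ≤ a⟩ ⟨v, hv : v ≤ a⟩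
  refine Subtype.ext (?_ : (a ⊓ x) ⊔ (u ⊓ v) = ((a ⊓ x) ⊔ u) ⊓ ((a ⊓ x) ⊔ v))
  have inf_sup_of_le {w : L} (hw : w ≤ a) : (a ⊓ x) ⊔ w = a ⊓ (x ⊔ w) := by
    rw [ha.inf_sup_left, inf_eq_right.2 hw]
  rw [inf_sup_of_le (inf_le_left.trans hu), inf_sup_of_le hu, inf_sup_of_le hv, hx u v,
    inf_inf_distrib_left]

theorem isDistributiveElement_of_Iic_inf_of_sup (ha : IsNeutralElement a) {x : L}
    (hinf : IsDistributiveElement (⟨a ⊓ x, inf_le_left⟩ : Set.Iic a))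
    (hsup : IsDistributiveElement (x ⊔ a)) : IsDistributiveElement x := by
  refine fun y z => le_antisymm sup_inf_le (ha.le_of_le_sup_of_inf_le ?_ ?_)
  · calc
      (x ⊔ y) ⊓ (x ⊔ z) ≤ (x ⊔ a ⊔ y) ⊓ (x ⊔ a ⊔ z) := by gcongr <;> exact le_sup_left
      _ = x ⊔ a ⊔ (y ⊓ z) := (hsup y z).symm
      _ = a ⊔ (x ⊔ (y ⊓ z)) := by rw [sup_comm x a, sup_assoc]
  · have inf_distrib : (a ⊓ x) ⊔ ((a ⊓ y) ⊓ (a ⊓ z)) =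
        ((a ⊓ x) ⊔ (a ⊓ y)) ⊓ ((a ⊓ x) ⊔ (a ⊓ z)) :=
      congrArg Subtype.val (hinf ⟨a ⊓ y, inf_le_left⟩ ⟨a ⊓ z, inf_le_left⟩)
    calc
      a ⊓ ((x ⊔ y) ⊓ (x ⊔ z)) = ((a ⊓ x) ⊔ (a ⊓ y)) ⊓ ((a ⊓ x) ⊔ (a ⊓ z)) := by
        rw [inf_inf_distrib_left, ha.inf_sup_left, ha.inf_sup_left]
      _ = (a ⊓ x) ⊔ ((a ⊓ y) ⊓ (a ⊓ z)) := inf_distrib.symm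
      _ ≤ x ⊔ (y ⊓ z) := by gcongr <;> exact inf_le_right

end IsNeutralElement

theorem isDistributiveElement_sup_atom_iff_general {L : Type*} [Lattice L] {a : L}
    (ha : IsNeutralElement a) (x : L) :
    IsDistributiveElement x ↔
      IsDistributiveElement (⟨a ⊓ x, inf_le_left⟩ : Set.Iic a) ∧ IsDistributiveElement (x ⊔ a) :=
  ⟨fun hx => ⟨ha.isDistributiveElement_Iic_inf hx, hx.sup ha.isDistributiveElement⟩,
    fun ⟨hinf, hsup⟩ => ha.isDistributiveElement_of_Iic_inf_of_sup hinf hsup⟩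

/-- If `a` is an atom and a neutral element of a lattice `L` with least element, then
an element `x ∈ L` is a distributive element of `L` if and only if `x ⊔ a` is. -/
theorem isDistributiveElement_sup_atom_iff {L : Type*} [Lattice L] [OrderBot L] (a : L)
    (ha : IsAtom a) (hn : IsNeutralElement a) (x : L) :
    IsDistributiveElement x ↔ IsDistributiveElement (x ⊔ a) :=
  (isDistributiveElement_sup_atom_iff_general hn x).trans
    (and_iff_right (isDistributiveElement_Iic_of_isAtom ha _))
end

section
/- Let G be a group acting on a set A such that the action is not transitive and the stabilizers of any two points of A coincide (for all x, y ∈ A, Stab(x) = Stab(y)). Then a congruence α on the G-set A is a distributive element of the congruence lattice Con(A) if and only if α is the equality relation or the universal relation on A. -/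
/-- The congruence lattice `Con(A)` of a `G`-set `A`: the sublattice of the lattice
`Setoid A` of all equivalence relations on `A` (where meet is intersection and join is
the transitive closure of the union) consisting of the equivalence relations compatible
with the action of `G`. -/
def gSetCongruences (G A : Type*) [Group G] [MulAction G A] : Sublattice (Setoid A) where
  carrier := {r : Setoid A | ∀ (g : G) (x y : A), r x y → r (g • x) (g • y)}
  supClosed' := by
    intro r hr s hs g x y hxy
    rw [Setoid.sup_eq_eqvGen] at hxy ⊢
    induction hxy with
    | rel a b h => exact Relation.EqvGen.rel _ _ (h.imp (hr g a b) (hs g a b))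
    | refl a => exact Relation.EqvGen.refl _
    | symm a b _ ih => exact Relation.EqvGen.symm _ _ ih
    | trans a b c _ _ ih1 ih2 => exact Relation.EqvGen.trans _ _ _ ih1 ih2
  infClosed' := by
    intro r hr s hs g x y hxy
    exact ⟨hr g x y hxy.1, hs g x y hxy.2⟩

/-!
For `c` and `a` with the same stabilizer there is an equivariant map `A → A` sending `g • c` to
`g • a` and fixing every point outside the orbit of `c`. It is injective on orbits, so its kernel
meets the orbit congruence trivially; for `a ≠ b`, the kernels of the maps given by `c ↦ a` and
`c ↦ b` also meet trivially. Testing a distributive element `α` on these two pairs of congruences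
shows that a nontrivial relation `α a b` forces `α c a` for every `c` outside the orbits of `a` and
`b`, and, when `a` and `b` lie in different orbits, for every `c` in these orbits as well.
-/

open MulAction

section Lattice

variable {L : Type*} [Lattice L] {x y z : L}

theorem isDistributiveElement_of_isBot (hx : IsBot x) : IsDistributiveElement x := fun y z => by
  simp only [sup_eq_right.2 (hx _)]

theorem isDistributiveElement_of_isTop (hx : IsTop x) : IsDistributiveElement x := fun y z => by
  simp only [sup_eq_left.2 (hx _), inf_idem]

theorem IsDistributiveElement.sup_inf_sup_le (hx : IsDistributiveElement x) (hyz : y ⊓ z ≤ x) :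
    (x ⊔ y) ⊓ (x ⊔ z) ≤ x :=
  (hx y z).symm.trans_le (sup_le le_rfl hyz)

end Lattice

theorem IsDistributiveElement.rel_of_disjoint {A : Type*} {S : Sublattice (Setoid A)} {α β γ : S}
    (hα : IsDistributiveElement α) (hβγ : Disjoint β.1 γ.1) {x u v y : A}
    (hxu : β.1 x u) (huy : α.1 u y) (hxv : γ.1 x v) (hvy : α.1 v y) : α.1 x y := by
  have sup_rel {δ : S} {w : A} (hxw : δ.1 x w) (hwy : α.1 w y) : (α.1 ⊔ δ.1) x y :=
    Setoid.trans' _ ((le_sup_right : δ.1 ≤ α.1 ⊔ δ.1) hxw) ((le_sup_left : α.1 ≤ α.1 ⊔ δ.1) hwy)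
  have inf_le : β ⊓ γ ≤ α := hβγ.le_bot.trans bot_le
  exact hα.sup_inf_sup_le inf_le ⟨sup_rel hxu huy, sup_rel hxv hvy⟩

section GSet

variable {G A : Type*} [Group G] [MulAction G A]

theorem smul_eq_smul_of_stabilizer_le {B : Type*} [MulAction G B] {c : A} {a : B}
    (hca : stabilizer G c ≤ stabilizer G a) {g k : G} (h : g • c = k • c) : g • a = k • a := by
  have hmem : k⁻¹ * g ∈ stabilizer G c := by
    rw [mem_stabilizer_iff, mul_smul, h, inv_smul_smul]
  simpa only [mem_stabilizer_iff, mul_smul, inv_smul_eq_iff] using hca hmem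

/-- The congruence of a `G`-set given by the kernel of an equivariant map. -/
def kerCongruence {B : Type*} [MulAction G B] (f : A →[G] B) : gSetCongruences G A :=
  ⟨Setoid.ker f, fun g x y hxy => by
    simpa only [Setoid.ker_def, map_smul, smul_left_cancel_iff] using hxy⟩

variable (G A) in
/-- The congruence of a `G`-set whose classes are the orbits. -/
def orbitCongruence : gSetCongruences G A :=
  ⟨orbitRel G A, fun g x y hxy => by
    simpa only [orbitRel_apply, ← orbit_eq_iff, orbit_smul] using hxy⟩

open Classical in
/-- The equivariant self-map moving the orbit of `c` onto the orbit of `a` by `g • c ↦ g • a` and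
fixing all other points. It is defined by choosing, for `x` in the orbit of `c`, some `g` with
`g • c = x`; the value does not depend on this choice since `c` has the smaller stabilizer. -/
noncomputable def orbitCollapse (c a : A) (hca : stabilizer G c ≤ stabilizer G a) : A →[G] A where
  toFun x := if hx : ∃ g : G, g • c = x then hx.choose • a else x
  map_smul' g x := by
    by_cases hx : ∃ k : G, k • c = x
    · have hgx : ∃ k : G, k • c = g • x := mem_orbit_of_mem_orbit g hx
      simp only [dif_pos hx, dif_pos hgx, id, ← mul_smul]
      apply smul_eq_smul_of_stabilizer_le hca
      rw [mul_smul, hgx.choose_spec, hx.choose_spec]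
    · have hgx : ¬ ∃ k : G, k • c = g • x := by
        rwa [← mem_orbit_iff, ← orbit_eq_iff, orbit_smul, orbit_eq_iff]
      simp only [dif_neg hx, dif_neg hgx, id]

section OrbitCollapse

variable {a b c : A}

theorem orbitCollapse_of_notMem (hca : stabilizer G c ≤ stabilizer G a) {x : A}
    (hx : x ∉ orbit G c) : orbitCollapse c a hca x = x :=
  dif_neg hx

theorem orbitCollapse_self (hca : stabilizer G c ≤ stabilizer G a) :
    orbitCollapse c a hca c = a := by
  have hc : ∃ g : G, g • c = c := mem_orbit_self c
  calc orbitCollapse c a hca c = hc.choose • a := dif_pos hc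
    _ = (1 : G) • a := smul_eq_smul_of_stabilizer_le hca (by rw [hc.choose_spec, one_smul])
    _ = a := one_smul G a

theorem orbitCollapse_smul (hca : stabilizer G c ≤ stabilizer G a) (g : G) :
    orbitCollapse c a hca (g • c) = g • a := by
  rw [map_smul, orbitCollapse_self]

theorem kerCongruence_orbitCollapse_rel (hca : stabilizer G c ≤ stabilizer G a)
    (ha : a ∉ orbit G c) : (kerCongruence (orbitCollapse c a hca)).1 c a := by
  change orbitCollapse c a hca c = orbitCollapse c a hca a
  rw [orbitCollapse_self, orbitCollapse_of_notMem hca ha]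

theorem orbitCollapse_injOn_orbit (hca : stabilizer G c = stabilizer G a) (x : A) :
    Set.InjOn (orbitCollapse c a hca.le) (orbit G x) := by
  by_cases hx : x ∈ orbit G c
  · rw [orbit_eq_iff.2 hx]
    rintro _ ⟨g, rfl⟩ _ ⟨k, rfl⟩ h
    simp only [orbitCollapse_smul] at h
    exact smul_eq_smul_of_stabilizer_le hca.ge h
  · have notMem {y : A} (hy : y ∈ orbit G x) : y ∉ orbit G c := by
      rwa [← orbit_eq_iff, orbit_eq_iff.2 hy, orbit_eq_iff]
    intro y hy z hz h
    rwa [orbitCollapse_of_notMem _ (notMem hy), orbitCollapse_of_notMem _ (notMem hz)] at h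

theorem disjoint_kerCongruence_orbitCollapse_orbitCongruence
    (hca : stabilizer G c = stabilizer G a) :
    Disjoint (kerCongruence (orbitCollapse c a hca.le)).1 (orbitCongruence G A).1 := by
  rw [disjoint_iff_inf_le]
  rintro x y ⟨hker, horbit⟩
  exact orbitCollapse_injOn_orbit hca y horbit (mem_orbit_self y) hker

theorem mem_orbit_of_orbitCollapse_eq (hca : stabilizer G c ≤ stabilizer G a)
    (hcb : stabilizer G c ≤ stabilizer G b) (hab : a ≠ b) {x y : A} (hx : x ∈ orbit G c)
    (ha : orbitCollapse c a hca x = orbitCollapse c a hca y)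
    (hb : orbitCollapse c b hcb x = orbitCollapse c b hcb y) : y ∈ orbit G c := by
  by_contra hy
  obtain ⟨g, rfl⟩ := hx
  rw [orbitCollapse_smul, orbitCollapse_of_notMem _ hy] at ha hb
  exact hab (smul_left_cancel g (ha.trans hb.symm))

theorem disjoint_kerCongruence_orbitCollapse (hca : stabilizer G c = stabilizer G a)
    (hcb : stabilizer G c ≤ stabilizer G b) (hab : a ≠ b) :
    Disjoint (kerCongruence (orbitCollapse c a hca.le)).1
      (kerCongruence (orbitCollapse c b hcb)).1 := by
  rw [disjoint_iff_inf_le]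
  rintro x y ⟨(ha : orbitCollapse c a _ x = orbitCollapse c a _ y),
    (hb : orbitCollapse c b _ x = orbitCollapse c b _ y)⟩
  by_cases hx : x ∈ orbit G c
  · have hy := mem_orbit_of_orbitCollapse_eq hca.le hcb hab hx ha hb
    exact orbitCollapse_injOn_orbit hca c hx hy ha
  · have hy : y ∉ orbit G c := fun hy =>
      hx (mem_orbit_of_orbitCollapse_eq hca.le hcb hab hy ha.symm hb.symm)
    rwa [orbitCollapse_of_notMem _ hx, orbitCollapse_of_notMem _ hy] at ha

end OrbitCollapse

namespace IsDistributiveElement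

variable {α : gSetCongruences G A} {a b c : A}

theorem rel_of_notMem_orbit (hα : IsDistributiveElement α) (hab : α.1 a b) (hne : a ≠ b)
    (hca : stabilizer G c = stabilizer G a) (hcb : stabilizer G c ≤ stabilizer G b)
    (ha : a ∉ orbit G c) (hb : b ∉ orbit G c) : α.1 c a :=
  hα.rel_of_disjoint (disjoint_kerCongruence_orbitCollapse hca hcb hne)
    (kerCongruence_orbitCollapse_rel hca.le ha) (Setoid.refl' _ a)
    (kerCongruence_orbitCollapse_rel hcb hb) (Setoid.symm' _ hab)

theorem rel_smul_of_notMem_orbit (hα : IsDistributiveElement α) (hab : α.1 a b)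
    (ha : a ∉ orbit G b) (g : G) (hstab : stabilizer G (g • b) = stabilizer G a) :
    α.1 (g • a) a := by
  have ha' : a ∉ orbit G (g • b) := by rwa [orbit_smul]
  exact Setoid.symm' _ <|
    hα.rel_of_disjoint (disjoint_kerCongruence_orbitCollapse_orbitCongruence hstab)
      (Setoid.symm' _ (kerCongruence_orbitCollapse_rel hstab.le ha'))
      (α.2 g _ _ (Setoid.symm' _ hab))
      (mem_orbit_smul g a : (orbitCongruence G A).1 a (g • a)) (Setoid.refl' _ _)

theorem eq_top_of_rel_of_notMem_orbit (hα : IsDistributiveElement α)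
    (hstab : ∀ x y : A, stabilizer G x = stabilizer G y) (hab : α.1 a b)
    (ha : a ∉ orbit G b) : α.1 = ⊤ := by
  have rel_a (c : A) : α.1 c a := by
    by_cases hca : c ∈ orbit G a
    · obtain ⟨g, rfl⟩ := hca
      exact hα.rel_smul_of_notMem_orbit hab ha g (hstab _ _)
    by_cases hcb : c ∈ orbit G b
    · obtain ⟨g, rfl⟩ := hcb
      have hba : α.1 b a := Setoid.symm' _ hab
      exact Setoid.trans' _
        (hα.rel_smul_of_notMem_orbit hba (mt mem_orbit_symm.1 ha) g (hstab _ _)) hba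
    · have hne : a ≠ b := fun h => ha (h ▸ mem_orbit_self a)
      exact hα.rel_of_notMem_orbit hab hne (hstab _ _) (hstab _ _).le
        (mt mem_orbit_symm.1 hca) (mt mem_orbit_symm.1 hcb)
  exact Setoid.eq_top_iff.2 fun x y => Setoid.trans' _ (rel_a x) (Setoid.symm' _ (rel_a y))

theorem exists_rel_notMem_orbit (hα : IsDistributiveElement α) (hnt : ¬ IsPretransitive G A)
    (hstab : ∀ x y : A, stabilizer G x = stabilizer G y) (hab : α.1 a b) (hne : a ≠ b) :
    ∃ x y : A, α.1 x y ∧ x ∉ orbit G y := by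
  by_cases ha : a ∈ orbit G b
  · obtain ⟨c, hc⟩ : ∃ c, c ∉ orbit G b := not_forall.1 (mt (isPretransitive_iff_base b).2 hnt)
    have hca : c ∉ orbit G a := by rwa [orbit_eq_iff.2 ha]
    exact ⟨c, a, hα.rel_of_notMem_orbit hab hne (hstab _ _) (hstab _ _).le
      (mt mem_orbit_symm.1 hca) (mt mem_orbit_symm.1 hc), hca⟩
  · exact ⟨a, b, hab, ha⟩

end IsDistributiveElement

end GSet

/-- Let `G` be a group acting non-transitively on a set `A` such that the stabilizers of
any two points of `A` coincide. A congruence `α` on the `G`-set `A` is a distributive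
element of the congruence lattice `Con(A)` if and only if `α` is the equality relation
(`⊥`) or the universal relation (`⊤`) on `A`. -/
theorem gSetCongruence_isDistributiveElement_iff (G A : Type*) [Group G] [MulAction G A]
    (hnt : ¬ ∀ a b : A, ∃ g : G, g • a = b)
    (hstab : ∀ x y : A, MulAction.stabilizer G x = MulAction.stabilizer G y)
    (α : gSetCongruences G A) :
    IsDistributiveElement α ↔ ((α : Setoid A) = ⊥ ∨ (α : Setoid A) = ⊤) := by
  constructor
  · intro hα
    rw [or_iff_not_imp_left]
    intro hbot
    obtain ⟨a, b, hab, hne⟩ : ∃ a b, α.1 a b ∧ a ≠ b := by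
      by_contra! h
      exact hbot (eq_bot_iff.2 fun x y => h x y)
    obtain ⟨x, y, hxy, hx⟩ :=
      hα.exists_rel_notMem_orbit (mt (isPretransitive_iff G A).1 hnt) hstab hab hne
    exact hα.eq_top_of_rel_of_notMem_orbit hstab hxy hx
  · rintro (hbot | htop)
    · exact isDistributiveElement_of_isBot fun β => hbot.trans_le (bot_le : ⊥ ≤ β.1)
    · exact isDistributiveElement_of_isTop fun β => (le_top : β.1 ≤ ⊤).trans_eq htop.symm
end

section
/- Let G be a group acting on a set A such that the action is not transitive and the stabilizers of any two points of A coincide (for all x, y ∈ A, Stab(x) = Stab(y)). Then a congruence α on the G-set A is a codistributive element of the congruence lattice Con(A) if and only if α is the equality relation or the universal relation on A. -/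
/-!
For points `x`, `y` with the same stabilizer in different orbits, `g • x ↦ g • y` is a bijection
between the two orbits, so the congruence `θ(x, y)` generated by the pair relates, besides equal
points, only `g • x` and `g • y`, and a congruence `α` not containing `(x, y)` meets it in
equality. If `α` is codistributive and contains `(a, b)` but not `(a, c)`, and `c` lies outside
the orbit of `a`, it follows that `(a, b) ∈ α ⊓ (θ(a, c) ⊔ β) = α ⊓ β` for every congruence `β`
containing `(c, b)`. Taking `β = θ(c, b)` shows that `α ≠ ⊥` relates points of different orbits;
taking for `β` the congruence whose classes are the orbit of `a` and its complement then shows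
that `α = ⊤`.
-/

open MulAction

namespace IsCodistributiveElement

variable {L : Type*} [Lattice L] {x y z : L}

theorem of_isBot (hx : IsBot x) : IsCodistributiveElement x := fun _ _ =>
  le_antisymm (inf_le_left.trans (hx _)) le_inf_sup

theorem of_isTop (hx : IsTop x) : IsCodistributiveElement x := fun _ _ => by
  simp only [inf_eq_right.2 (hx _)]

theorem inf_sup_le (hx : IsCodistributiveElement x) (hxy : x ⊓ y ≤ z) : x ⊓ (y ⊔ z) ≤ z :=
  (hx y z).trans_le (sup_le hxy inf_le_right)

end IsCodistributiveElement

section Orbit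

variable {G A B : Type*} [Group G] [MulAction G A] [MulAction G B]

theorem swap_mem_orbit_swap {p q : A × B} (h : p ∈ orbit G q) : p.swap ∈ orbit G q.swap := by
  obtain ⟨g, rfl⟩ := h
  exact mem_orbit q.swap g

theorem orbit_eq_of_mem_orbit_prodMk {x y u v w : A} (huv : (u, v) ∈ orbit G (x, y))
    (hvw : (v, w) ∈ orbit G (x, y)) : orbit G x = orbit G y := by
  obtain ⟨g, hg⟩ := huv
  obtain ⟨k, hk⟩ := hvw
  calc
    orbit G x = orbit G v := by rw [← (Prod.mk.inj hk).1, orbit_smul]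
    _ = orbit G y := by rw [← (Prod.mk.inj hg).2, orbit_smul]

theorem eq_of_mem_orbit_prodMk {x u : A} {y v w : B} (hxy : stabilizer G x ≤ stabilizer G y)
    (hv : (u, v) ∈ orbit G (x, y)) (hw : (u, w) ∈ orbit G (x, y)) : v = w := by
  obtain ⟨g, hg⟩ := hv
  obtain ⟨k, hk⟩ := hw
  obtain ⟨rfl, rfl⟩ := Prod.mk.inj hg
  obtain ⟨hx, rfl⟩ := Prod.mk.inj hk
  have hmem : g⁻¹ * k ∈ stabilizer G x := by
    rw [mem_stabilizer_iff, mul_smul, inv_smul_eq_iff, hx]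
  have hfix := mem_stabilizer_iff.1 (hxy hmem)
  rwa [mul_smul, inv_smul_eq_iff, eq_comm] at hfix

theorem exists_orbit_ne_of_not_isPretransitive (h : ¬ IsPretransitive G A) (a : A) :
    ∃ c, orbit G a ≠ orbit G c := by
  contrapose! h
  exact (isPretransitive_iff_base a).2 fun c => orbit_eq_iff.1 (h c).symm

end Orbit

namespace gSetCongruences

variable {G A : Type*} [Group G] [MulAction G A] {x y u v a : A}

theorem rel_of_mem_orbit {α : gSetCongruences G A} (h : (u, v) ∈ orbit G (x, y))
    (hxy : (α : Setoid A) x y) : (α : Setoid A) u v := by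
  obtain ⟨g, hg⟩ := h
  obtain ⟨rfl, rfl⟩ := Prod.mk.inj hg
  exact α.2 g x y hxy

/-- The congruence whose classes are the orbit of `a` and its complement. It separates `a` from
every other orbit while identifying all points of the other orbits with each other. -/
def orbitOrCompl (G : Type*) {A : Type*} [Group G] [MulAction G A] (a : A) :
    gSetCongruences G A :=
  ⟨Setoid.ker fun u => orbit G u = orbit G a, fun g u v huv => by
    simpa only [Setoid.ker_def, orbit_smul] using huv⟩

theorem orbitOrCompl_rel_iff : (orbitOrCompl G a : Setoid A) u v ↔
    (orbit G u = orbit G a ↔ orbit G v = orbit G a) :=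
  eq_iff_iff

/-- The principal congruence `θ(x, y)` generated by a pair of points with the same stabilizer in
different orbits; it links two orbits while meeting trivially every congruence that does not relate
`x` and `y`. It is given explicitly, in terms of the orbits of `(x, y)` and `(y, x)` under the
diagonal action on `A × A`. -/
def pairCongruence (hstab : stabilizer G x = stabilizer G y) (hxy : orbit G x ≠ orbit G y) :
    gSetCongruences G A where
  val :=
    { r := fun u v => u = v ∨ (u, v) ∈ orbit G (x, y) ∨ (u, v) ∈ orbit G (y, x)
      iseqv :=
        { refl := fun _ => Or.inl rfl
          symm := fun h =>
            h.imp Eq.symm fun h => h.symm.imp swap_mem_orbit_swap swap_mem_orbit_swap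
          trans := by
            rintro u v w (rfl | huv | huv) (rfl | hvw | hvw)
            · exact .inl rfl
            · exact .inr (.inl hvw)
            · exact .inr (.inr hvw)
            · exact .inr (.inl huv)
            · exact absurd (orbit_eq_of_mem_orbit_prodMk huv hvw) hxy
            · exact .inl (eq_of_mem_orbit_prodMk hstab.ge (swap_mem_orbit_swap huv) hvw)
            · exact .inr (.inr huv)
            · exact .inl (eq_of_mem_orbit_prodMk hstab.le (swap_mem_orbit_swap huv) hvw)
            · exact absurd (orbit_eq_of_mem_orbit_prodMk huv hvw) hxy.symm } }
  property g _ _ h :=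
    h.imp (congrArg (g • ·)) (Or.imp (mem_orbit_of_mem_orbit g) (mem_orbit_of_mem_orbit g))

theorem pairCongruence_rel (hstab : stabilizer G x = stabilizer G y)
    (hxy : orbit G x ≠ orbit G y) : (pairCongruence hstab hxy : Setoid A) x y :=
  .inr (.inl (mem_orbit_self _))

theorem disjoint_pairCongruence {α : gSetCongruences G A}
    (hstab : stabilizer G x = stabilizer G y) (hxy : orbit G x ≠ orbit G y)
    (hα : ¬ (α : Setoid A) x y) :
    Disjoint (α : Setoid A) (pairCongruence hstab hxy : Setoid A) := by
  rw [disjoint_iff_inf_le]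
  rintro u v ⟨huv, rfl | hmem | hmem⟩
  · rfl
  · exact absurd (rel_of_mem_orbit (mem_orbit_symm.1 hmem) huv) hα
  · exact absurd (Setoid.symm' _ (rel_of_mem_orbit (mem_orbit_symm.1 hmem) huv)) hα

end gSetCongruences

namespace IsCodistributiveElement

open gSetCongruences

variable {G A : Type*} [Group G] [MulAction G A] {α : gSetCongruences G A} {a b c : A}

theorem rel_or_rel (hα : IsCodistributiveElement α) (β : gSetCongruences G A)
    (hstab : stabilizer G a = stabilizer G c) (hac : orbit G a ≠ orbit G c)
    (hab : (α : Setoid A) a b) (hcb : (β : Setoid A) c b) :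
    (α : Setoid A) a c ∨ (β : Setoid A) a b := by
  refine or_iff_not_imp_left.2 fun hαac => ?_
  let θ := pairCongruence hstab hac
  have hinf : α ⊓ θ ≤ β :=
    Subtype.coe_le_coe.1 ((disjoint_pairCongruence hstab hac hαac).le_bot.trans bot_le)
  have hle : (α : Setoid A) ⊓ (θ ⊔ β) ≤ β := Subtype.coe_le_coe.2 (hα.inf_sup_le hinf)
  have hθ : (θ : Setoid A) ≤ θ ⊔ β := le_sup_left
  have hβ : (β : Setoid A) ≤ θ ⊔ β := le_sup_right
  exact hle ⟨hab, Setoid.trans' _ (hθ (pairCongruence_rel hstab hac)) (hβ hcb)⟩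

theorem rel_of_orbit_ne_of_orbit_ne (hα : IsCodistributiveElement α)
    (hstab_ac : stabilizer G a = stabilizer G c) (hstab_cb : stabilizer G c = stabilizer G b)
    (hab : (α : Setoid A) a b) (hne : a ≠ b) (hac : orbit G a ≠ orbit G c)
    (hcb : orbit G c ≠ orbit G b) : (α : Setoid A) a c := by
  by_contra hαac
  have hαcb : ¬ (α : Setoid A) c b := fun h => hαac (Setoid.trans' _ hab (Setoid.symm' _ h))
  have hθab := (hα.rel_or_rel (pairCongruence hstab_cb hcb) hstab_ac hac hab
    (pairCongruence_rel hstab_cb hcb)).resolve_left hαac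
  exact hne ((disjoint_pairCongruence hstab_cb hcb hαcb).le_bot ⟨hab, hθab⟩)

theorem rel_of_orbit_ne (hα : IsCodistributiveElement α)
    (hstab : stabilizer G a = stabilizer G c) (hab : (α : Setoid A) a b)
    (horb : orbit G a ≠ orbit G b) (hac : orbit G a ≠ orbit G c) : (α : Setoid A) a c := by
  have hcb : (orbitOrCompl G a : Setoid A) c b :=
    orbitOrCompl_rel_iff.2 (iff_of_false hac.symm horb.symm)
  have hab' : ¬ (orbitOrCompl G a : Setoid A) a b := fun h =>
    horb ((orbitOrCompl_rel_iff.1 h).1 rfl).symm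
  exact (hα.rel_or_rel _ hstab hac hab hcb).resolve_right hab'

theorem eq_top_of_rel_of_orbit_ne (hα : IsCodistributiveElement α)
    (hstab : ∀ x y : A, stabilizer G x = stabilizer G y) (hab : (α : Setoid A) a b)
    (horb : orbit G a ≠ orbit G b) : (α : Setoid A) = ⊤ := by
  have hall : ∀ c, (α : Setoid A) a c := fun c => by
    by_cases hac : orbit G a = orbit G c
    · have hbc : orbit G b ≠ orbit G c := hac ▸ horb.symm
      exact Setoid.trans' _ hab
        (hα.rel_of_orbit_ne (hstab b c) (Setoid.symm' _ hab) horb.symm hbc)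
    · exact hα.rel_of_orbit_ne (hstab a c) hab horb hac
  exact Setoid.eq_top_iff.2 fun u v => Setoid.trans' _ (Setoid.symm' _ (hall u)) (hall v)

theorem exists_rel_orbit_ne_of_ne_bot (hα : IsCodistributiveElement α)
    (hstab : ∀ x y : A, stabilizer G x = stabilizer G y) (hnt : ¬ IsPretransitive G A)
    (hbot : (α : Setoid A) ≠ ⊥) : ∃ a b, (α : Setoid A) a b ∧ orbit G a ≠ orbit G b := by
  obtain ⟨a, b, hab, hne⟩ : ∃ a b, (α : Setoid A) a b ∧ a ≠ b := by
    contrapose! hbot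
    exact eq_bot_iff.2 fun u v => hbot u v
  by_cases horb : orbit G a = orbit G b
  · obtain ⟨c, hac⟩ := exists_orbit_ne_of_not_isPretransitive hnt a
    have hcb : orbit G c ≠ orbit G b := horb ▸ hac.symm
    exact ⟨a, c, hα.rel_of_orbit_ne_of_orbit_ne (hstab a c) (hstab c b) hab hne hac hcb, hac⟩
  · exact ⟨a, b, hab, horb⟩

end IsCodistributiveElement

/-- Let `G` be a group acting non-transitively on a set `A` such that the stabilizers of
any two points of `A` coincide. A congruence `α` on the `G`-set `A` is a codistributive
element of the congruence lattice `Con(A)` if and only if `α` is the equality relation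
(`⊥`) or the universal relation (`⊤`) on `A`. -/
theorem gSetCongruence_isCodistributiveElement_iff (G A : Type*) [Group G] [MulAction G A]
    (hnt : ¬ ∀ a b : A, ∃ g : G, g • a = b)
    (hstab : ∀ x y : A, MulAction.stabilizer G x = MulAction.stabilizer G y)
    (α : gSetCongruences G A) :
    IsCodistributiveElement α ↔ ((α : Setoid A) = ⊥ ∨ (α : Setoid A) = ⊤) := by
  constructor
  · intro hα
    refine or_iff_not_imp_left.2 fun hbot => ?_
    obtain ⟨a, b, hab, horb⟩ := hα.exists_rel_orbit_ne_of_ne_bot hstab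
      (fun h => hnt h.exists_smul_eq) hbot
    exact hα.eq_top_of_rel_of_orbit_ne hstab hab horb
  · rintro (hbot | htop)
    · exact .of_isBot fun β => Subtype.coe_le_coe.1 (hbot.trans_le bot_le)
    · exact .of_isTop fun β => Subtype.coe_le_coe.1 (le_top.trans_eq htop.symm)
end

section
/- Let G be a group acting on a set A such that the action is not transitive and the stabilizers of any two points of A coincide (for all x, y ∈ A, Stab(x) = Stab(y)). Then a congruence α on the G-set A is a costandard element of the congruence lattice Con(A) if and only if α is the equality relation or the universal relation on A. -/
def IsCostandardElement {L : Type*} [Lattice L] (x : L) : Prop :=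
  ∀ y z : L, (x ⊓ y) ⊔ z = (x ⊔ z) ⊓ (y ⊔ z)

/-!
Let `p` and `q` lie in different orbits. As their stabilizers coincide, gluing `g • p` to `g • q`
for every `g` yields a congruence `θ` with no other nontrivial classes. If `α` does not relate `p`
and `q`, then `α ⊓ θ` is trivial, so costandardness of `α` gives `(α ⊔ z) ⊓ (θ ⊔ z) = z` for every
congruence `z`; hence `α p u` and `z u q` together force `z p q`.

Suppose `α a b` with `a`, `b` in different orbits. Taking for `z` the partition into the orbit of
`a` and its complement shows that `α` relates `a` to everything outside its orbit; the same holds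
for `b`, so `α = ⊤`. Otherwise `α` refines the orbit relation. If then `α p u`, gluing `u` to some
`q` in another orbit gives a `z` relating `p`, `q` and `u`; but gluing identifies no two points of
one orbit, so `p = u`.
-/

open MulAction

theorem isCostandardElement_of_isBot {L : Type*} [Lattice L] {x : L} (hx : IsBot x) :
    IsCostandardElement x := fun y z ↦ by
  rw [inf_eq_left.2 (hx y), sup_eq_right.2 (hx z), inf_eq_left.2 le_sup_right]

theorem isCostandardElement_of_isTop {L : Type*} [Lattice L] {x : L} (hx : IsTop x) :
    IsCostandardElement x := fun y z ↦ by
  rw [inf_eq_right.2 (hx y), sup_eq_left.2 (hx z), inf_eq_right.2 (hx _)]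

theorem IsCostandardElement.sup_inf_sup_le {L : Type*} [Lattice L] {x y z : L}
    (hx : IsCostandardElement x) (h : x ⊓ y ≤ z) : (x ⊔ z) ⊓ (y ⊔ z) ≤ z :=
  (hx y z).symm.trans_le (sup_le h le_rfl)

section

variable {G A : Type*} [Group G] [MulAction G A] {p q : A}

theorem ker_mem_gSetCongruences {B : Type*} {f : A → B} (hf : ∀ (g : G) (x : A), f (g • x) = f x) :
    Setoid.ker f ∈ gSetCongruences G A := fun g x y (hxy : f x = f y) ↦
  show f (g • x) = f (g • y) by rw [hf, hf, hxy]

theorem orbitRel_mem_gSetCongruences : orbitRel G A ∈ gSetCongruences G A := by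
  rw [← Setoid.ker_mk_eq (orbitRel G A)]
  exact ker_mem_gSetCongruences fun g x ↦ Quotient.sound' ⟨g, rfl⟩

theorem rel_smul_smul_iff_of_mem_gSetCongruences {r : Setoid A} (hr : r ∈ gSetCongruences G A)
    (g : G) {x y : A} : r (g • x) (g • y) ↔ r x y :=
  ⟨fun h ↦ by simpa only [inv_smul_smul] using hr g⁻¹ _ _ h, hr g x y⟩

theorem orbitRel_smul_smul_iff (g k : G) {x y : A} :
    orbitRel G A (g • x) (k • y) ↔ orbitRel G A x y := by
  simp only [orbitRel_apply, ← orbit_eq_iff, orbit_smul]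

theorem smul_eq_smul_iff_of_stabilizer_eq (hstab : stabilizer G p = stabilizer G q) {g k : G} :
    g • p = k • p ↔ g • q = k • q := by
  have smul_eq_iff (x : A) : g • x = k • x ↔ k⁻¹ * g ∈ stabilizer G x := by
    rw [mem_stabilizer_iff, mul_smul, inv_smul_eq_iff]
  rw [smul_eq_iff, smul_eq_iff, hstab]

theorem exists_not_orbitRel (h : ¬ IsPretransitive G A) (a : A) : ∃ b, ¬ orbitRel G A a b := by
  contrapose! h
  exact (isPretransitive_iff_base a).2 fun b ↦ (orbitRel G A).symm' (h b)

/-- The congruence generated by the pair `(p, q)`, for points `p`, `q` with the same stabilizer in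
different orbits: its nontrivial classes are the pairs `{g • p, g • q}`. -/
def gluingCongruence (hstab : stabilizer G p = stabilizer G q) (horb : ¬ orbitRel G A p q) :
    gSetCongruences G A where
  val :=
    { r := fun x y ↦ x = y ∨ ∃ g : G, s(x, y) = s(g • p, g • q)
      iseqv := by
        have smul_ne (g k : G) : g • p ≠ k • q := fun h ↦
          horb ((orbitRel_smul_smul_iff g k).1 (h ▸ (orbitRel G A).refl' _))
        refine ⟨fun x ↦ .inl rfl, fun h ↦ ?_, ?_⟩
        · rwa [eq_comm, Sym2.eq_swap]
        · rintro x y z (rfl | ⟨g, hxy⟩) (rfl | ⟨k, hyz⟩)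
          · exact .inl rfl
          · exact .inr ⟨k, hyz⟩
          · exact .inr ⟨g, hxy⟩
          · left
            rcases Sym2.eq_iff.1 hxy with ⟨rfl, rfl⟩ | ⟨rfl, rfl⟩ <;>
              rcases Sym2.eq_iff.1 hyz with ⟨hy, rfl⟩ | ⟨hy, rfl⟩
            · exact absurd hy.symm (smul_ne k g)
            · exact (smul_eq_smul_iff_of_stabilizer_eq hstab).2 hy
            · exact (smul_eq_smul_iff_of_stabilizer_eq hstab).1 hy
            · exact absurd hy (smul_ne g k) }
  property := by
    rintro k x y (rfl | ⟨g, hxy⟩)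
    · exact .inl rfl
    · refine .inr ⟨k * g, ?_⟩
      simpa only [Sym2.map_mk, mul_smul] using congrArg (Sym2.map (k • ·)) hxy

theorem gluingCongruence_rel (hstab : stabilizer G p = stabilizer G q)
    (horb : ¬ orbitRel G A p q) : (gluingCongruence hstab horb : Setoid A) p q :=
  .inr ⟨1, by rw [one_smul, one_smul]⟩

theorem inf_gluingCongruence_eq_bot {r : Setoid A} (hr : r ∈ gSetCongruences G A)
    (hpq : ¬ r p q) (hstab : stabilizer G p = stabilizer G q) (horb : ¬ orbitRel G A p q) :
    r ⊓ gluingCongruence hstab horb = ⊥ := by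
  refine eq_bot_iff.2 ?_
  rintro x y ⟨hxy, rfl | ⟨g, hg⟩⟩
  · rfl
  · have not_rel : ¬ r (g • p) (g • q) := by rwa [rel_smul_smul_iff_of_mem_gSetCongruences hr]
    rcases Sym2.eq_iff.1 hg with ⟨rfl, rfl⟩ | ⟨rfl, rfl⟩
    · exact absurd hxy not_rel
    · exact absurd (r.symm' hxy) not_rel

namespace IsCostandardElement

variable {α : gSetCongruences G A}

theorem rel_of_rel_of_rel (hα : IsCostandardElement α) (hstab : stabilizer G p = stabilizer G q)
    (horb : ¬ orbitRel G A p q) (hpq : ¬ (α : Setoid A) p q) {z : gSetCongruences G A} {u : A}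
    (hpu : (α : Setoid A) p u) (huq : (z : Setoid A) u q) : (z : Setoid A) p q := by
  let θ := gluingCongruence hstab horb
  have inf_le : α ⊓ θ ≤ z := (inf_gluingCongruence_eq_bot α.2 hpq hstab horb).trans_le bot_le
  have rel_sup : (α ⊔ z : Setoid A) p q :=
    Setoid.trans' _ (le_sup_left (b := (z : Setoid A)) hpu) (le_sup_right (a := (α : Setoid A)) huq)
  have rel_gluing_sup : (θ ⊔ z : Setoid A) p q :=
    le_sup_left (b := (z : Setoid A)) (gluingCongruence_rel hstab horb)
  exact hα.sup_inf_sup_le inf_le ⟨rel_sup, rel_gluing_sup⟩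

theorem rel_of_not_orbitRel (hα : IsCostandardElement α) {a b c : A}
    (hstab : stabilizer G a = stabilizer G c) (hab : (α : Setoid A) a b)
    (horb_ab : ¬ orbitRel G A a b) (horb_ac : ¬ orbitRel G A a c) : (α : Setoid A) a c := by
  by_contra hac
  let z : gSetCongruences G A := ⟨Setoid.ker (orbitRel G A a),
    ker_mem_gSetCongruences fun g x ↦ propext <| by
      simpa only [one_smul] using orbitRel_smul_smul_iff (1 : G) g (x := a) (y := x)⟩
  have rel_bc : (z : Setoid A) b c := propext (iff_of_false horb_ab horb_ac)
  have rel_ac : orbitRel G A a a = orbitRel G A a c :=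
    hα.rel_of_rel_of_rel (z := z) hstab horb_ac hac hab rel_bc
  exact horb_ac (rel_ac.mp ((orbitRel G A).refl' a))

theorem eq_top_of_rel_of_not_orbitRel (hα : IsCostandardElement α)
    (hstab : ∀ x y : A, stabilizer G x = stabilizer G y) {a b : A} (hab : (α : Setoid A) a b)
    (horb : ¬ orbitRel G A a b) : (α : Setoid A) = ⊤ := by
  have rel_a (c : A) : (α : Setoid A) a c := by
    by_cases hac : orbitRel G A a c
    · have horb_bc : ¬ orbitRel G A b c := fun hbc ↦
        horb ((orbitRel G A).trans' hac ((orbitRel G A).symm' hbc))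
      exact Setoid.trans' _ hab <| hα.rel_of_not_orbitRel (hstab b c) (Setoid.symm' _ hab)
        (mt (Setoid.symm' _) horb) horb_bc
    · exact hα.rel_of_not_orbitRel (hstab a c) hab horb hac
  exact Setoid.eq_top_iff.2 fun x y ↦ Setoid.trans' _ (Setoid.symm' _ (rel_a x)) (rel_a y)

theorem eq_bot_of_le_orbitRel (hα : IsCostandardElement α) (hnt : ¬ IsPretransitive G A)
    (hstab : ∀ x y : A, stabilizer G x = stabilizer G y) (hle : (α : Setoid A) ≤ orbitRel G A) :
    (α : Setoid A) = ⊥ := by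
  refine eq_bot_iff.2 fun p u hpu ↦ ?_
  obtain ⟨q, horb_pq⟩ := exists_not_orbitRel hnt p
  have horb_uq : ¬ orbitRel G A u q := fun huq ↦ horb_pq (Setoid.trans' _ (hle hpu) huq)
  have rel_uq := gluingCongruence_rel (hstab u q) horb_uq
  have rel_pq := hα.rel_of_rel_of_rel (hstab p q) horb_pq (mt (@hle p q) horb_pq) hpu rel_uq
  have rel_pu := Setoid.trans' _ rel_pq (Setoid.symm' _ rel_uq)
  exact (inf_gluingCongruence_eq_bot orbitRel_mem_gSetCongruences horb_uq (hstab u q)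
    horb_uq).le ⟨hle hpu, rel_pu⟩

end IsCostandardElement

end

/-- Let `G` be a group acting non-transitively on a set `A` such that the stabilizers of
any two points of `A` coincide. A congruence `α` on the `G`-set `A` is a costandard
element of the congruence lattice `Con(A)` if and only if `α` is the equality relation
(`⊥`) or the universal relation (`⊤`) on `A`. -/
theorem gSetCongruence_isCostandardElement_iff (G A : Type*) [Group G] [MulAction G A]
    (hnt : ¬ ∀ a b : A, ∃ g : G, g • a = b)
    (hstab : ∀ x y : A, MulAction.stabilizer G x = MulAction.stabilizer G y)
    (α : gSetCongruences G A) :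
    IsCostandardElement α ↔ ((α : Setoid A) = ⊥ ∨ (α : Setoid A) = ⊤) := by
  constructor
  · intro hα
    by_cases hle : (α : Setoid A) ≤ orbitRel G A
    · exact .inl <| hα.eq_bot_of_le_orbitRel (fun h ↦ hnt h.exists_smul_eq) hstab hle
    · simp only [Setoid.le_def, not_forall] at hle
      obtain ⟨a, b, hab, horb⟩ := hle
      exact .inr <| hα.eq_top_of_rel_of_not_orbitRel hstab hab horb
  · rintro (hbot | htop)
    · exact isCostandardElement_of_isBot fun β ↦ hbot.trans_le bot_le
    · exact isCostandardElement_of_isTop fun β ↦ htop.ge.trans' le_top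
end

section
/- Let G be a group acting on a set A such that the action is not transitive and the stabilizers of any two points of A coincide (for all x, y ∈ A, Stab(x) = Stab(y)). Then a congruence α on the G-set A is a neutral element of the congruence lattice Con(A) if and only if α is the equality relation or the universal relation on A. -/
/-!
Neutral elements are `0`-distributive: what is disjoint from them is closed under joins. If a
congruence `α` relates `x ≠ y` and separates the points of two blocks `B ∋ x, z` and `C ∋ y, z`,
then it is disjoint from the congruences collapsing the translates of `B` and of `C`, not from their
join, so it is not `0`-distributive. As all stabilizers agree, two points in different orbits form a
block. Hence, for `0`-distributive `α`, the blocks `{x, z}` and `{y, z}` show that `x` is related to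
every `z` outside the orbits of `x` and `y`. If `α` identifies two points of one orbit, this reaches
all other orbits and, by translating back, everything. If instead it separates the points of the
orbit of `x`, then the blocks `orbit G x` and `{g • x, y}` force `g • x = x`, so the action is
trivial and `x` is again related to everything.
-/

section Lattice

variable {L : Type*} [Lattice L]

theorem isNeutralElement_bot [OrderBot L] : IsNeutralElement (⊥ : L) := fun y z => by
  simp only [bot_sup_eq, sup_bot_eq, bot_inf_eq, inf_bot_eq, inf_sup_self]

theorem isNeutralElement_top [OrderTop L] : IsNeutralElement (⊤ : L) := fun y z => by
  simp only [top_sup_eq, sup_top_eq, top_inf_eq, inf_top_eq, sup_inf_self]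

/-- `0`-distributive elements of a lattice with a least element: the elements disjoint from `x` are
closed under joins. This is the consequence of neutrality that already forces triviality for
congruences of `G`-sets. -/
def IsZeroDistributive [OrderBot L] (x : L) : Prop :=
  ∀ ⦃y z : L⦄, Disjoint x y → Disjoint x z → Disjoint x (y ⊔ z)

theorem IsNeutralElement.isZeroDistributive [OrderBot L] {x : L} (hx : IsNeutralElement x) :
    IsZeroDistributive x := by
  intro y z hxy hxz
  have inf_le_y : x ⊓ (y ⊔ z) ≤ y := calc
    x ⊓ (y ⊔ z) ≤ (x ⊔ y) ⊓ (y ⊔ z) ⊓ (z ⊔ x) :=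
      le_inf (inf_le_inf_right _ le_sup_left) (inf_le_left.trans le_sup_right)
    _ = (x ⊓ y) ⊔ (y ⊓ z) ⊔ (z ⊓ x) := hx y z
    _ = y ⊓ z := by rw [hxy.eq_bot, hxz.symm.eq_bot, bot_sup_eq, sup_bot_eq]
    _ ≤ y := inf_le_left
  exact disjoint_iff_inf_le.2 ((le_inf inf_le_left inf_le_y).trans hxy.le_bot)

end Lattice

open MulAction
open scoped Pointwise

theorem isBlock_pair {G A : Type*} [Group G] [MulAction G A] {x y : A}
    (hstab : stabilizer G x = stabilizer G y) (hxy : y ∉ orbit G x) :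
    IsBlock G ({x, y} : Set A) := by
  have hyx : x ∉ orbit G y := fun h => hxy (mem_orbit_symm.1 h)
  have smul_eq_iff (g : G) : g • x = x ↔ g • y = y := by
    rw [← mem_stabilizer_iff, hstab, mem_stabilizer_iff]
  rw [isBlock_iff_smul_eq_of_mem]
  rintro g a (rfl | rfl) (h | h)
  · rw [Set.smul_set_insert, Set.smul_set_singleton, h, (smul_eq_iff g).1 h]
  · exact (hxy ⟨g, h⟩).elim
  · exact (hyx ⟨g, h⟩).elim
  · rw [Set.smul_set_insert, Set.smul_set_singleton, h, (smul_eq_iff g).2 h]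

namespace gSetCongruences

variable {G A : Type*} [Group G] [MulAction G A] {α : gSetCongruences G A} {x y z : A}

instance : BoundedOrder (gSetCongruences G A) where
  bot := ⟨⊥, fun _ _ _ h => congrArg _ h⟩
  bot_le α := bot_le (a := α.1)
  top := ⟨⊤, fun _ _ _ _ => trivial⟩
  le_top α := le_top (a := α.1)

theorem coe_eq_bot_iff : (α : Setoid A) = ⊥ ↔ α = ⊥ :=
  Subtype.coe_injective.eq_iff (b := (⊥ : gSetCongruences G A))

theorem coe_eq_top_iff : (α : Setoid A) = ⊤ ↔ α = ⊤ :=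
  Subtype.coe_injective.eq_iff (b := (⊤ : gSetCongruences G A))

theorem eq_top_of_forall_rel (x : A) (hx : ∀ w, α.1 x w) : α = ⊤ :=
  coe_eq_top_iff.1 <| Setoid.eq_top_iff.2 fun a b => α.1.trans' (α.1.symm' (hx a)) (hx b)

theorem exists_rel_ne_of_ne_bot (hα : α ≠ ⊥) : ∃ x y, α.1 x y ∧ x ≠ y := by
  by_contra! h
  exact hα (le_bot_iff.1 fun a b => h a b)

theorem rel_of_rel_smul_smul {g : G} (h : α.1 (g • x) (g • y)) : α.1 x y := by
  simpa only [inv_smul_smul] using α.2 g⁻¹ _ _ h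

theorem disjoint_iff_rel {β : gSetCongruences G A} :
    Disjoint α β ↔ ∀ a b, α.1 a b → β.1 a b → a = b :=
  disjoint_iff_inf_le.trans
    ⟨fun h a b hα hβ => h (show (α ⊓ β).1 a b from ⟨hα, hβ⟩), fun h a b hab => h a b hab.1 hab.2⟩

/-- The congruence that collapses each translate of the block `B` to a point and is equality
elsewhere, serving as the test element for `0`-distributivity. -/
def ofBlock {B : Set A} (hB : IsBlock G B) : gSetCongruences G A where
  val.r a b := a = b ∨ ∃ g : G, a ∈ g • B ∧ b ∈ g • B
  val.iseqv.refl _ := Or.inl rfl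
  val.iseqv.symm := by
    rintro a b (rfl | ⟨g, ha, hb⟩)
    exacts [Or.inl rfl, Or.inr ⟨g, hb, ha⟩]
  val.iseqv.trans := by
    rintro a b c (rfl | ⟨g, ha, hb⟩) (rfl | ⟨k, hb', hc⟩)
    · exact Or.inl rfl
    · exact Or.inr ⟨k, hb', hc⟩
    · exact Or.inr ⟨g, ha, hb⟩
    · have translate_eq : g • B = k • B := hB.smul_eq_smul_of_nonempty ⟨b, hb, hb'⟩
      exact Or.inr ⟨k, translate_eq ▸ ha, hc⟩
  property := by
    rintro k a b (rfl | ⟨g, ha, hb⟩)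
    · exact Or.inl rfl
    · refine Or.inr ⟨k * g, ?_⟩
      rw [mul_smul]
      exact ⟨Set.smul_mem_smul_set ha, Set.smul_mem_smul_set hb⟩

theorem ofBlock_rel {B : Set A} (hB : IsBlock G B) {a b : A} (ha : a ∈ B) (hb : b ∈ B) :
    (ofBlock hB).1 a b :=
  Or.inr ⟨1, by simpa only [one_smul] using ⟨ha, hb⟩⟩

theorem disjoint_ofBlock {B : Set A} (hB : IsBlock G B)
    (hαB : B.Pairwise fun a b => ¬ α.1 a b) : Disjoint α (ofBlock hB) := by
  rw [disjoint_iff_rel]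
  rintro _ _ hα (rfl | ⟨g, ⟨a, ha, rfl⟩, ⟨b, hb, rfl⟩⟩)
  · rfl
  · exact congrArg (g • ·) (hαB.eq ha hb (not_not.2 (rel_of_rel_smul_smul hα)))

theorem pairwise_pair_not_rel (h : ¬ α.1 x y) :
    ({x, y} : Set A).Pairwise fun a b => ¬ α.1 a b :=
  Set.pairwise_pair.2 fun _ => ⟨h, fun h' => h (α.1.symm' h')⟩

theorem eq_of_rel_of_mem_blocks (hα : IsZeroDistributive α) {B C : Set A} (hB : IsBlock G B)
    (hC : IsBlock G C) (hαB : B.Pairwise fun a b => ¬ α.1 a b)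
    (hαC : C.Pairwise fun a b => ¬ α.1 a b) (hxB : x ∈ B) (hzB : z ∈ B) (hzC : z ∈ C)
    (hyC : y ∈ C) (hxy : α.1 x y) : x = y := by
  have disj : Disjoint α (ofBlock hB ⊔ ofBlock hC) :=
    hα (disjoint_ofBlock hB hαB) (disjoint_ofBlock hC hαC)
  have hxz : (ofBlock hB ⊔ ofBlock hC).1 x z :=
    (le_sup_left : ofBlock hB ≤ ofBlock hB ⊔ ofBlock hC) (ofBlock_rel hB hxB hzB)
  have hzy : (ofBlock hB ⊔ ofBlock hC).1 z y :=
    (le_sup_right : ofBlock hC ≤ ofBlock hB ⊔ ofBlock hC) (ofBlock_rel hC hzC hyC)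
  exact disjoint_iff_rel.1 disj x y hxy (Setoid.trans' _ hxz hzy)

theorem rel_of_notMem_orbit (hα : IsZeroDistributive α)
    (hstab_x : stabilizer G x = stabilizer G z) (hstab_y : stabilizer G y = stabilizer G z)
    (hxy : α.1 x y) (hne : x ≠ y) (hzx : z ∉ orbit G x) (hzy : z ∉ orbit G y) : α.1 x z := by
  by_contra hxz
  have hyz : ¬ α.1 y z := fun h => hxz (α.1.trans' hxy h)
  exact hne <| eq_of_rel_of_mem_blocks hα (isBlock_pair hstab_x hzx) (isBlock_pair hstab_y hzy)
    (pairwise_pair_not_rel hxz) (pairwise_pair_not_rel hyz)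
    (Set.mem_insert x _) (Set.mem_insert_of_mem x rfl)
    (Set.mem_insert_of_mem y rfl) (Set.mem_insert y _) hxy

theorem smul_eq_of_pairwise_orbit (hα : IsZeroDistributive α) {g : G}
    (hstab : stabilizer G (g • x) = stabilizer G y) (hxy : α.1 x y) (hne : x ≠ y)
    (horbit : (orbit G x).Pairwise fun a b => ¬ α.1 a b) : g • x = x := by
  have hyx : y ∉ orbit G x := fun hy => horbit (mem_orbit_self x) hy hne hxy
  have hygx : y ∉ orbit G (g • x) := by rwa [orbit_smul]
  have hgxy : α.1 (g • x) y := by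
    by_contra hgxy
    exact hne <| eq_of_rel_of_mem_blocks hα (.orbit x) (isBlock_pair hstab hygx) horbit
      (pairwise_pair_not_rel hgxy) (mem_orbit_self x) (mem_orbit x g)
      (Set.mem_insert _ _) (Set.mem_insert_of_mem _ rfl) hxy
  exact horbit.eq (mem_orbit x g) (mem_orbit_self x)
    (not_not.2 (α.1.trans' hgxy (α.1.symm' hxy)))

theorem eq_top_of_rel_of_mem_orbit (hα : IsZeroDistributive α) (hnt : ¬ IsPretransitive G A)
    (hstab : ∀ x y : A, stabilizer G x = stabilizer G y) (hxy : α.1 x y) (hne : x ≠ y)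
    (hy : y ∈ orbit G x) : α = ⊤ := by
  have rel_outside (z : A) (hz : z ∉ orbit G x) : α.1 x z :=
    rel_of_notMem_orbit hα (hstab x z) (hstab y z) hxy hne hz (by rwa [orbit_eq_iff.2 hy])
  obtain ⟨z, hz⟩ : ∃ z, z ∉ orbit G x := by
    rwa [isPretransitive_iff_orbit_eq_univ x, Set.eq_univ_iff_forall, not_forall] at hnt
  refine eq_top_of_forall_rel x fun w => ?_
  by_cases hw : w ∈ orbit G x
  · obtain ⟨g, rfl⟩ := hw
    have hgz : g • z ∉ orbit G x := by rwa [← orbit_eq_iff, orbit_smul, orbit_eq_iff]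
    exact α.1.trans' (rel_outside (g • z) hgz) (α.1.symm' (α.2 g x z (rel_outside z hz)))
  · exact rel_outside w hw

theorem eq_top_of_rel_of_pairwise_orbit (hα : IsZeroDistributive α)
    (hstab : ∀ x y : A, stabilizer G x = stabilizer G y) (hxy : α.1 x y) (hne : x ≠ y)
    (horbit : (orbit G x).Pairwise fun a b => ¬ α.1 a b) : α = ⊤ := by
  have orbit_eq (w : A) : orbit G w = {w} := by
    refine Set.eq_singleton_iff_unique_mem.2 ⟨mem_orbit_self w, ?_⟩
    rintro _ ⟨g, rfl⟩
    have hg : g ∈ stabilizer G x :=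
      smul_eq_of_pairwise_orbit hα (hstab (g • x) y) hxy hne horbit
    rwa [hstab x w] at hg
  refine eq_top_of_forall_rel x fun w => ?_
  rcases eq_or_ne w x with rfl | hwx
  · exact α.1.refl' w
  rcases eq_or_ne w y with rfl | hwy
  · exact hxy
  · exact rel_of_notMem_orbit hα (hstab x w) (hstab y w) hxy hne
      (by rwa [orbit_eq]) (by rwa [orbit_eq])

theorem eq_bot_or_eq_top_of_isZeroDistributive (hα : IsZeroDistributive α)
    (hnt : ¬ IsPretransitive G A) (hstab : ∀ x y : A, stabilizer G x = stabilizer G y) :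
    α = ⊥ ∨ α = ⊤ := by
  refine or_iff_not_imp_left.2 fun hbot => ?_
  obtain ⟨x, y, hxy, hne⟩ := exists_rel_ne_of_ne_bot hbot
  by_cases horbit : (orbit G x).Pairwise fun a b => ¬ α.1 a b
  · exact eq_top_of_rel_of_pairwise_orbit hα hstab hxy hne horbit
  · simp only [Set.Pairwise, not_forall, not_not] at horbit
    obtain ⟨a, ha, b, hb, hab, hrel⟩ := horbit
    exact eq_top_of_rel_of_mem_orbit hα hnt hstab hrel hab (by rwa [orbit_eq_iff.2 ha])

end gSetCongruences

/-- Let `G` be a group acting non-transitively on a set `A` such that the stabilizers of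
any two points of `A` coincide. A congruence `α` on the `G`-set `A` is a neutral
element of the congruence lattice `Con(A)` if and only if `α` is the equality relation
(`⊥`) or the universal relation (`⊤`) on `A`. -/
theorem gSetCongruence_isNeutralElement_iff (G A : Type*) [Group G] [MulAction G A]
    (hnt : ¬ ∀ a b : A, ∃ g : G, g • a = b)
    (hstab : ∀ x y : A, MulAction.stabilizer G x = MulAction.stabilizer G y)
    (α : gSetCongruences G A) :
    IsNeutralElement α ↔ ((α : Setoid A) = ⊥ ∨ (α : Setoid A) = ⊤) := by
  rw [gSetCongruences.coe_eq_bot_iff, gSetCongruences.coe_eq_top_iff]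
  constructor
  · intro hα
    exact gSetCongruences.eq_bot_or_eq_top_of_isZeroDistributive hα.isZeroDistributive
      (fun h => hnt h.exists_smul_eq) hstab
  · rintro (rfl | rfl)
    exacts [isNeutralElement_bot, isNeutralElement_top]
end
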